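/- arXiv:2603.17344 — 5 statements merged into one kernel-verified Lean document; each statement's English description precedes it below -/
import Mathlib

section
/- Suppose Assumption 1 holds for a Borel probability measure P on ℝ^m with support Ξ, tail index α > 0, scale function q and directional function λ, and suppose Assumption 2 holds for X ⊆ ℝ^n, the same closed cone Ξ, a function g : X × Ξ → ℝ, exponents (γ, ρ), and limit function g*. Fix s ≥ 1. Let (x_ε)_{ε∈(0,1)} be a family of points of X such that s^{−γ} x_ε ∈ X for every ε, and suppose there exists ε₀ ∈ (0,1) such that P({z ∈ ℝ^m : g(s^{−γ} x_ε, z) > 0}) ≤ ε^{1/s^α} for all ε ∈ (0, ε₀). Define the violation probability V(x) := P({z ∈ ℝ^m : g(x, z) > 0}) for x ∈ X. Then liminf_{ε→0⁺} log V(x_ε) / log ε ≥ 1, with the convention log 0 = −∞ (so the ratio is +∞ whenever V(x_ε) = 0, since log ε < 0). -/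
open Filter Topology MeasureTheory Set

noncomputable section

/-- Euclidean space `ℝ^d`. -/
abbrev Rn (d : ℕ) : Type := EuclideanSpace ℝ (Fin d)

/-- A set is a cone: closed under multiplication by positive scalars. -/
def IsPosCone {d : ℕ} (Z : Set (Rn d)) : Prop :=
  ∀ c : ℝ, 0 < c → ∀ z ∈ Z, c • z ∈ Z

/-- `f : (0,∞) → (0,∞)` is regularly varying with index `κ`:
`f(uz)/f(u) → z^κ` as `u → ∞`, for every `z > 0`. -/
def RegVary (f : ℝ → ℝ) (κ : ℝ) : Prop :=
  (∀ u : ℝ, 0 < u → 0 < f u) ∧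
  ∀ z : ℝ, 0 < z → Tendsto (fun u : ℝ => f (u * z) / f u) atTop (𝓝 (z ^ κ))

/-- `f ∈ MRV(Z, h, f*)` (multivariate regular variation on the cone `Z`), except
for the requirement `h ∈ RV(κ)` which is stated separately: `f, f* : Z → [0,∞)`,
`f*` continuous on `Z`, and `f(u • z_u)/h(u) → f*(z)` whenever `z_u → z` in `Z`. -/
def MultiRegVary {d : ℕ} (Z : Set (Rn d)) (f : Rn d → ℝ) (h : ℝ → ℝ)
    (fstar : Rn d → ℝ) : Prop :=
  (∀ z ∈ Z, 0 ≤ f z) ∧ (∀ z ∈ Z, 0 ≤ fstar z) ∧ ContinuousOn fstar Z ∧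
  ∀ z ∈ Z, ∀ zu : ℝ → Rn d, (∀ u : ℝ, 0 < u → zu u ∈ Z) →
    Tendsto zu atTop (𝓝 z) →
    Tendsto (fun u : ℝ => f (u • zu u) / h u) atTop (𝓝 (fstar z))

/-- The asymptotic cone `A^∞_θ` of a set `A` with rate `θ`. -/
def asymCone {d : ℕ} (A : Set (Rn d)) (θ : ℝ) : Set (Rn d) :=
  {y | ∃ a : ℕ → Rn d, ∃ lamk : ℕ → ℝ,
    (∀ k, a k ∈ A) ∧ (∀ k, 0 < lamk k) ∧ Tendsto lamk atTop atTop ∧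
    Tendsto (fun k => (lamk k ^ θ)⁻¹ • a k) atTop (𝓝 y)}

/-- Assumption 1: `P` is a Borel probability measure on `ℝ^m` whose support is the
nonempty closed cone `Ξ`, with density `exp (-Q z)` on `Ξ` (and `0` outside) w.r.t.
Lebesgue measure, `Q ∈ MRV(Ξ, q, lam)` with `q ∈ RV(α)`, `α > 0`, and `lam > 0`
on unit vectors of `Ξ`. -/
def Assumption1 {d : ℕ} (P : Measure (Rn d)) (Ξ : Set (Rn d))
    (Q : Rn d → ℝ) (q : ℝ → ℝ) (lam : Rn d → ℝ) (α : ℝ) : Prop :=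
  IsProbabilityMeasure P ∧
  Ξ.Nonempty ∧ IsClosed Ξ ∧ IsPosCone Ξ ∧
  -- Ξ is the support of P: the smallest closed set of full measure
  P Ξ = 1 ∧ (∀ C : Set (Rn d), IsClosed C → P C = 1 → Ξ ⊆ C) ∧
  -- density of P w.r.t. Lebesgue measure
  P = volume.withDensity
    (fun z => ENNReal.ofReal (Ξ.indicator (fun z' => Real.exp (-(Q z'))) z)) ∧
  0 < α ∧ RegVary q α ∧ MultiRegVary Ξ Q q lam ∧
  (∀ z ∈ Ξ, ‖z‖ = 1 → 0 < lam z)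

/-- Condition (A1): `gs` is a continuous limit function on `X^∞_γ × Ξ` and
`g(x_u, z_u)/u^ρ → gs(y, w)` along all admissible families. -/
def CondA1 {n m : ℕ} (X : Set (Rn n)) (Ξ : Set (Rn m)) (g : Rn n → Rn m → ℝ)
    (γ ρ : ℝ) (gs : Rn n → Rn m → ℝ) : Prop :=
  ContinuousOn (fun p : Rn n × Rn m => gs p.1 p.2) ((asymCone X γ) ×ˢ Ξ) ∧
  ∀ y ∈ asymCone X γ, ∀ w ∈ Ξ, ∀ xu : ℝ → Rn n, ∀ zu : ℝ → Rn m,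
    (∀ u : ℝ, 0 < u → xu u ∈ X) → (∀ u : ℝ, 0 < u → zu u ∈ Ξ) →
    Tendsto (fun u : ℝ => (u ^ γ)⁻¹ • xu u) atTop (𝓝 y) →
    Tendsto (fun u : ℝ => u⁻¹ • zu u) atTop (𝓝 w) →
    Tendsto (fun u : ℝ => g (xu u) (zu u) / u ^ ρ) atTop (𝓝 (gs y w))

/-- Condition (A2): `X^∞_γ \ {0} ≠ ∅`. -/
def CondA2 {n : ℕ} (X : Set (Rn n)) (γ : ℝ) : Prop :=
  (asymCone X γ \ {0}).Nonempty

/-- Condition (A3): `gs(y, 0) < 0` for all `y ∈ X^∞_γ \ {0}`. -/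
def CondA3 {n m : ℕ} (X : Set (Rn n)) (γ : ℝ) (gs : Rn n → Rn m → ℝ) : Prop :=
  ∀ y ∈ asymCone X γ \ {0}, gs y 0 < 0

/-- Condition (A4): every `y ∈ X^∞_γ \ {0}` admits `w ∈ Ξ` with `gs(y, w) > 0`. -/
def CondA4 {n m : ℕ} (X : Set (Rn n)) (Ξ : Set (Rn m)) (γ : ℝ)
    (gs : Rn n → Rn m → ℝ) : Prop :=
  ∀ y ∈ asymCone X γ \ {0}, ∃ w ∈ Ξ, 0 < gs y w

/-- Condition (A5): if `γ < 0` then `g(0, z) ≤ 0` for all `z ∈ Ξ`. -/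
def CondA5 {n m : ℕ} (Ξ : Set (Rn m)) (g : Rn n → Rn m → ℝ) (γ : ℝ) : Prop :=
  γ < 0 → ∀ z ∈ Ξ, g 0 z ≤ 0

/-- Regularity preconditions of Assumption 2: `X` nonempty closed convex, `Ξ` a
nonempty closed cone, `g(·, z)` convex and lower semicontinuous on `X` for each
`z ∈ Ξ`, and `g(x, ·)` continuous on `Ξ` for each `x ∈ X`. -/
def GRegular {n m : ℕ} (X : Set (Rn n)) (Ξ : Set (Rn m))
    (g : Rn n → Rn m → ℝ) : Prop :=
  X.Nonempty ∧ IsClosed X ∧ Convex ℝ X ∧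
  Ξ.Nonempty ∧ IsClosed Ξ ∧ IsPosCone Ξ ∧
  (∀ z ∈ Ξ, ConvexOn ℝ X (fun x => g x z)) ∧
  (∀ z ∈ Ξ, LowerSemicontinuousOn (fun x => g x z) X) ∧
  (∀ x ∈ X, ContinuousOn (fun z => g x z) Ξ)

/-- Assumption 2: the regularity preconditions together with conditions (A1)–(A5)
for exponents `(γ, ρ)` with `γ ≠ 0`, `ρ ≥ 0`, and limit function `gs`. -/
def Assumption2 {n m : ℕ} (X : Set (Rn n)) (Ξ : Set (Rn m)) (g : Rn n → Rn m → ℝ)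
    (γ ρ : ℝ) (gs : Rn n → Rn m → ℝ) : Prop :=
  GRegular X Ξ g ∧ γ ≠ 0 ∧ 0 ≤ ρ ∧
  CondA1 X Ξ g γ ρ gs ∧ CondA2 X γ ∧ CondA3 X γ gs ∧ CondA4 X Ξ γ gs ∧
  CondA5 Ξ g γ

/-!
Write `V` for the violation probability. Let `v` run through points of `X` whose scale
`u = ‖v‖ ^ (1 / γ)` tends to infinity and whose direction `v / ‖v‖` converges to `y`. The part of
the violation set that matters is then the dilation by `u` of `{w ∈ Ξ | gs y w ≥ 0}`, and since the
density is `exp (-Q)` with `Q (u • w) ≈ q u * lam w`, Laplace's principle gives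
`-log V(v) ≈ I(y) * q u`, where `I(y)` is the infimum of `lam` over that set. The convexity of `g`
enters here: the infimum over `gs y w ≥ 0`, which governs the upper bound, equals the one over
`gs y w > 0`, which governs the lower bound.

Apply this to `v = s ^ (-γ) • x`. The bound `V(v) ≤ ε ^ (1 / s ^ α)` forces `u → ∞`, because `V` is
lower semicontinuous and positive (away from `0` when `γ < 0`). Passing from `v` to `x = s ^ γ • v`
keeps the direction `y` and multiplies `u` by `s`, hence `q u` by about `s ^ α`, so that
`-log V(x) ≈ s ^ α * -log V(v) ≥ -log ε`.
-/

section Filters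

variable {A B ι E : Type*}

lemma tendsto_graph_extend {F : Filter (ℝ × A)} {u : ℕ → ℝ} (hu : StrictMono u) {a : ℕ → A}
    {a₀ : ℝ → A} (ha : Tendsto (fun k => (u k, a k)) atTop F)
    (ha₀ : Tendsto (fun v => (v, a₀ v)) atTop F) :
    Tendsto (fun v => (v, Function.extend u a a₀ v)) atTop F := by
  refine fun S hS => mem_map.2 ?_
  obtain ⟨K, hK⟩ := mem_atTop_sets.1 (ha hS)
  filter_upwards [ha₀ hS, eventually_ge_atTop (u K)] with v hv₀ hvK
  by_cases hv : ∃ k, u k = v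
  · obtain ⟨k, rfl⟩ := hv
    simpa only [mem_preimage, hu.injective.extend_apply] using hK k (hu.le_iff_le.1 hvK)
  · simpa only [mem_preimage, Function.extend_apply' _ _ _ hv] using hv₀

/- Along a sequence tending to `F`, pass to a subsequence with strictly increasing first
coordinate; it is then part of the graph of a function, filled in by `a₀`. -/
lemma tendsto_of_forall_tendsto_graph {F : Filter (ℝ × A)} [F.IsCountablyGenerated]
    {G : Filter B} {f : ℝ × A → B} (hF : Tendsto Prod.fst F atTop)
    {a₀ : ℝ → A} (ha₀ : Tendsto (fun u => (u, a₀ u)) atTop F)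
    (h : ∀ a : ℝ → A, Tendsto (fun u => (u, a u)) atTop F →
      Tendsto (fun u => f (u, a u)) atTop G) :
    Tendsto f F G := by
  refine tendsto_of_seq_tendsto fun p hp => tendsto_of_subseq_tendsto fun ns hns => ?_
  obtain ⟨φ, hφ, hmono⟩ := strictMono_subseq_of_tendsto_atTop (hF.comp (hp.comp hns))
  have hpφ : Tendsto (fun k => p (ns (φ k))) atTop F := hp.comp (hns.comp hφ.tendsto_atTop)
  have hgraph := h _ (tendsto_graph_extend hmono (a := fun k => (p (ns (φ k))).2) hpφ ha₀)
  refine ⟨φ, (hgraph.comp (hF.comp hpφ)).congr fun k => ?_⟩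
  have hk := hmono.injective.extend_apply (fun k => (p (ns (φ k))).2) a₀ k
  simp only [Function.comp_apply] at hk ⊢
  rw [hk]

lemma eventually_forall_mem_of_isCompact [TopologicalSpace E] {l : Filter ι}
    {K S : Set E} (hK : IsCompact K) (hKS : K ⊆ S) {p : ι → E → Prop}
    (h : ∀ w ∈ K, ∀ᶠ iw in l ×ˢ 𝓝[S] w, p iw.1 iw.2) : ∀ᶠ i in l, ∀ w ∈ K, p i w := by
  have hprod : {iw : ι × E | iw.2 ∈ S → p iw.1 iw.2} ∈ l ×ˢ 𝓝ˢ K := by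
    refine hK.mem_prod_nhdsSet_of_forall fun w hw => ?_
    obtain ⟨pl, hpl, pw, hpw, hp⟩ := eventually_prod_iff.1 (h w hw)
    exact eventually_prod_iff.2 ⟨pl, hpl, _, eventually_nhdsWithin_iff.1 hpw,
      fun hi _ hiw hS => hp hi (hiw hS)⟩
  obtain ⟨pl, hpl, pw, hpw, hp⟩ := eventually_prod_iff.1 hprod
  filter_upwards [hpl] with i hi w hw
  exact hp hi (subset_of_mem_nhdsSet hpw hw) (hKS hw)

end Filters

lemma IsPosCone.tendsto_smul_nhdsGT_zero {d : ℕ} {Z : Set (Rn d)} (hcone : IsPosCone Z)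
    {z : Rn d} (hz : z ∈ Z) : Tendsto (fun t : ℝ => t • z) (𝓝[>] 0) (𝓝[Z] 0) := by
  refine tendsto_nhdsWithin_iff.2
    ⟨?_, eventually_nhdsWithin_of_forall fun t ht => hcone t ht z hz⟩
  simpa only [zero_smul, id_eq] using
    ((tendsto_id (x := 𝓝 (0 : ℝ))).smul_const z).mono_left nhdsWithin_le_nhds

lemma IsPosCone.zero_mem {d : ℕ} {Z : Set (Rn d)} (hcone : IsPosCone Z) (hcl : IsClosed Z)
    (hne : Z.Nonempty) : (0 : Rn d) ∈ Z := by
  obtain ⟨hlim, hmem⟩ :=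
    tendsto_nhdsWithin_iff.1 (hcone.tendsto_smul_nhdsGT_zero hne.some_mem)
  exact hcl.mem_of_tendsto hlim hmem

section AsymCone

variable {n : ℕ} {X : Set (Rn n)} {γ : ℝ} {ι : Type*} {l : Filter ι} {u : ι → ℝ}
  {x : ι → Rn n} {y : Rn n}

/-- The families `x` in `X` of the paper's condition (A1), along an arbitrary filter: the scale `u`
tends to infinity and `x / u ^ γ` converges to `y`. -/
structure ScalesTo (X : Set (Rn n)) (γ : ℝ) (u : ι → ℝ) (x : ι → Rn n) (l : Filter ι)
    (y : Rn n) : Prop where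
  atTop : Tendsto u l atTop
  mem : ∀ᶠ i in l, x i ∈ X
  tendsto : Tendsto (fun i => (u i ^ γ)⁻¹ • x i) l (𝓝 y)

namespace ScalesTo

lemma mem_asymCone [l.NeBot] (h : ScalesTo X γ u x l y) : y ∈ asymCone X γ := by
  have hex (k : ℕ) : ∃ i, (k : ℝ) < u i ∧ x i ∈ X ∧
      dist ((u i ^ γ)⁻¹ • x i) y < 1 / ((k : ℝ) + 1) :=
    ((h.atTop.eventually_gt_atTop _).and (h.mem.and
      (Metric.tendsto_nhds.1 h.tendsto _ Nat.one_div_pos_of_nat))).exists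
  choose i hui hxi hdist using hex
  refine ⟨x ∘ i, u ∘ i, hxi, fun k => (Nat.cast_nonneg k).trans_lt (hui k),
    tendsto_atTop_mono (fun k => (hui k).le) tendsto_natCast_atTop_atTop, ?_⟩
  exact tendsto_iff_dist_tendsto_zero.2 (squeeze_zero (fun _ => dist_nonneg)
    (fun k => (hdist k).le) tendsto_one_div_add_atTop_nhds_zero_nat)

lemma div_const (h : ScalesTo X γ u x l y) {t : ℝ} (ht : 0 < t) :
    ScalesTo X γ (fun i => u i / t) x l (t ^ γ • y) where
  atTop := h.atTop.atTop_div_const ht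
  mem := h.mem
  tendsto := by
    refine (h.tendsto.const_smul (t ^ γ)).congr' ?_
    filter_upwards [h.atTop.eventually_gt_atTop 0] with i hi
    rw [Real.div_rpow hi.le ht.le, inv_div, smul_smul, div_eq_mul_inv]

lemma mul_const (h : ScalesTo X γ u x l y) {s : ℝ} (hs : 0 < s)
    (hmem : ∀ᶠ i in l, s ^ γ • x i ∈ X) :
    ScalesTo X γ (fun i => u i * s) (fun i => s ^ γ • x i) l y where
  atTop := h.atTop.atTop_mul_const hs
  mem := hmem
  tendsto := by
    refine h.tendsto.congr' ?_
    filter_upwards [h.atTop.eventually_gt_atTop 0] with i hi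
    rw [Real.mul_rpow hi.le hs.le, mul_inv, smul_smul, inv_mul_cancel_right₀ (by positivity)]

lemma convex_comb {x' : ι → Rn n} {y' : Rn n} (h : ScalesTo X γ u x l y)
    (h' : ScalesTo X γ u x' l y') (hX : Convex ℝ X) {a b : ℝ} (ha : 0 ≤ a) (hb : 0 ≤ b)
    (hab : a + b = 1) :
    ScalesTo X γ u (fun i => a • x i + b • x' i) l (a • y + b • y') where
  atTop := h.atTop
  mem := by
    filter_upwards [h.mem, h'.mem] with i hi hi'
    exact hX hi hi' ha hb hab
  tendsto := by
    refine ((h.tendsto.const_smul a).add (h'.tendsto.const_smul b)).congr fun i => ?_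
    rw [smul_add, smul_comm a, smul_comm b]

end ScalesTo

lemma zero_mem_of_mem_asymCone (hX : IsClosed X) (hγ : γ < 0) (hy : y ∈ asymCone X γ) :
    (0 : Rn n) ∈ X := by
  obtain ⟨a, c, ha, hc, hctop, hlim⟩ := hy
  have hpow : Tendsto (fun k => c k ^ γ) atTop (𝓝 0) := by
    simpa only [neg_neg, Function.comp_def] using (tendsto_rpow_neg_atTop (neg_pos.2 hγ)).comp hctop
  have hprod := hpow.smul hlim
  rw [zero_smul] at hprod
  refine hX.mem_of_tendsto (hprod.congr fun k => ?_) (Eventually.of_forall ha)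
  exact smul_inv_smul₀ (Real.rpow_pos_of_pos (hc k) γ).ne' _

lemma add_smul_mem_of_mem_asymCone (hX : IsClosed X) (hconv : Convex ℝ X) (hγ : 0 < γ)
    (hy : y ∈ asymCone X γ) {x₀ : Rn n} (hx₀ : x₀ ∈ X) {t : ℝ} (ht : 0 ≤ t) :
    t • y + x₀ ∈ X := by
  refine hconv.smul_vadd_mem_of_isClosed_of_mem_asymptoticCone hX ht ?_ hx₀
  obtain ⟨a, c, ha, hc, hctop, hlim⟩ := hy
  have hasym := ((tendsto_rpow_atTop hγ).comp hctop).atTop_smul_nhds_tendsto_asymptoticNhds hlim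
  refine mem_asymptoticCone_iff.2 (hasym.frequently (Eventually.of_forall fun k => ?_).frequently)
  rw [Function.comp_apply, smul_inv_smul₀ (Real.rpow_pos_of_pos (hc k) γ).ne']
  exact ha k

lemma scalesTo_add_smul_of_pos (hX : IsClosed X) (hconv : Convex ℝ X) (hγ : 0 < γ)
    (hy : y ∈ asymCone X γ) {x₀ : Rn n} (hx₀ : x₀ ∈ X) :
    ScalesTo X γ id (fun v : ℝ => v ^ γ • y + x₀) atTop y where
  atTop := tendsto_id
  mem := (eventually_ge_atTop 0).mono fun _ hv =>
    add_smul_mem_of_mem_asymCone hX hconv hγ hy hx₀ (Real.rpow_nonneg hv γ)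
  tendsto := by
    have hlim : Tendsto (fun v : ℝ => y + (v ^ γ)⁻¹ • x₀) atTop (𝓝 y) := by
      simpa using ((tendsto_rpow_atTop hγ).inv_tendsto_atTop.smul_const x₀).const_add y
    refine hlim.congr' ?_
    filter_upwards [eventually_gt_atTop 0] with v hv
    rw [id_eq, smul_add, inv_smul_smul₀ (Real.rpow_pos_of_pos hv γ).ne']

/- A convex set containing `0` and `a` contains `t • a` for `t ∈ [0, 1]`, so an approximation of `y`
at one scale persists at all larger scales. -/
lemma eventually_exists_dist_lt_of_neg (hX : IsClosed X) (hconv : Convex ℝ X) (hγ : γ < 0)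
    (hy : y ∈ asymCone X γ) {η : ℝ} (hη : 0 < η) :
    ∀ᶠ v : ℝ in atTop, ∃ p ∈ X, dist ((v ^ γ)⁻¹ • p) y < η := by
  have hzero := zero_mem_of_mem_asymCone hX hγ hy
  obtain ⟨a, c, ha, hc, -, hlim⟩ := hy
  obtain ⟨k, hk⟩ := (Metric.tendsto_nhds.1 hlim η hη).exists
  filter_upwards [eventually_ge_atTop (c k)] with v hv
  have hck := Real.rpow_pos_of_pos (hc k) γ
  have hvpos := Real.rpow_pos_of_pos ((hc k).trans_le hv) γ
  refine ⟨v ^ γ • (c k ^ γ)⁻¹ • a k, ?_, by rwa [inv_smul_smul₀ hvpos.ne']⟩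
  rw [smul_smul, ← div_eq_mul_inv]
  exact hconv.smul_mem_of_zero_mem hzero (ha k) ⟨by positivity,
    div_le_one_of_le₀ (Real.rpow_le_rpow_of_nonpos (hc k) hv hγ.le) hck.le⟩

lemma exists_scalesTo_of_neg (hX : IsClosed X) (hconv : Convex ℝ X) (hγ : γ < 0)
    (hy : y ∈ asymCone X γ) : ∃ x : ℝ → Rn n, ScalesTo X γ id x atTop y := by
  have hzero := zero_mem_of_mem_asymCone hX hγ hy
  choose x hx hdist using fun v : ℝ => hX.exists_infDist_eq_dist ⟨0, hzero⟩ (v ^ γ • y)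
  refine ⟨x, tendsto_id, Eventually.of_forall hx, Metric.tendsto_nhds.2 fun η hη => ?_⟩
  filter_upwards [eventually_exists_dist_lt_of_neg hX hconv hγ hy hη, eventually_gt_atTop 0]
    with v ⟨p, hp, hpy⟩ hv
  have hvpos := Real.rpow_pos_of_pos hv γ
  have hscale (p : Rn n) : dist ((v ^ γ)⁻¹ • p) y = (v ^ γ)⁻¹ * dist (v ^ γ • y) p := by
    nth_rw 1 [← inv_smul_smul₀ hvpos.ne' y]
    rw [dist_smul₀, Real.norm_of_nonneg (by positivity), dist_comm]
  refine lt_of_le_of_lt ?_ hpy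
  rw [id_eq, hscale, hscale, ← hdist]
  gcongr
  exact Metric.infDist_le_dist_of_mem hp

lemma exists_scalesTo (hX : IsClosed X) (hconv : Convex ℝ X) (hne : X.Nonempty) (hγ : γ ≠ 0)
    (hy : y ∈ asymCone X γ) : ∃ x : ℝ → Rn n, ScalesTo X γ id x atTop y := by
  rcases hγ.lt_or_gt with hneg | hpos
  · exact exists_scalesTo_of_neg hX hconv hneg hy
  · exact ⟨_, scalesTo_add_smul_of_pos hX hconv hpos hy hne.some_mem⟩

lemma rpow_smul_mem_asymCone (hX : IsClosed X) (hconv : Convex ℝ X) (hne : X.Nonempty)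
    (hγ : γ ≠ 0) (hy : y ∈ asymCone X γ) {t : ℝ} (ht : 0 < t) : t ^ γ • y ∈ asymCone X γ := by
  obtain ⟨x, hx⟩ := exists_scalesTo hX hconv hne hγ hy
  exact (hx.div_const ht).mem_asymCone

lemma convex_asymCone (hX : IsClosed X) (hconv : Convex ℝ X) (hne : X.Nonempty) (hγ : γ ≠ 0) :
    Convex ℝ (asymCone X γ) := by
  intro y hy y' hy' a b ha hb hab
  obtain ⟨x, hx⟩ := exists_scalesTo hX hconv hne hγ hy
  obtain ⟨x', hx'⟩ := exists_scalesTo hX hconv hne hγ hy'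
  exact (hx.convex_comb hx' hconv ha hb hab).mem_asymCone

end AsymCone

lemma MultiRegVary.tendsto_prod {d : ℕ} {Z : Set (Rn d)} {f : Rn d → ℝ} {h : ℝ → ℝ}
    {fstar : Rn d → ℝ} (hf : MultiRegVary Z f h fstar) {z : Rn d} (hz : z ∈ Z) :
    Tendsto (fun p : ℝ × Rn d => f (p.1 • p.2) / h p.1) (atTop ×ˢ 𝓝[Z] z) (𝓝 (fstar z)) := by
  classical
  have hconst : Tendsto (fun _ : ℝ => z) atTop (𝓝[Z] z) :=
    tendsto_nhdsWithin_iff.2 ⟨tendsto_const_nhds, Eventually.of_forall fun _ => hz⟩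
  refine tendsto_of_forall_tendsto_graph tendsto_fst (tendsto_id.prodMk hconst) fun a ha => ?_
  obtain ⟨halim, haZ⟩ := tendsto_nhdsWithin_iff.1 (tendsto_snd.comp ha)
  have heq : (fun u => if a u ∈ Z then a u else z) =ᶠ[atTop] a := haZ.mono fun _ hu => if_pos hu
  refine (hf.2.2.2 z hz (fun u => if a u ∈ Z then a u else z) (fun u _ => ?_)
    (halim.congr' heq.symm)).congr' ?_
  · split_ifs with hu
    exacts [hu, hz]
  · filter_upwards [heq] with u hu
    rw [hu]

section LimitFunction

variable {n m : ℕ} {X : Set (Rn n)} {Ξ : Set (Rn m)} {g : Rn n → Rn m → ℝ} {γ ρ : ℝ}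
  {gs : Rn n → Rn m → ℝ} {ι : Type*} {l : Filter ι} {u : ι → ℝ} {x : ι → Rn n} {y : Rn n}
  {w : Rn m}

lemma one_mem_openSegment_rpow (hγ : γ ≠ 0) {r t : ℝ} (hr : 1 < r) (ht : 1 < t) :
    1 ∈ openSegment ℝ (r ^ γ) (t ^ (-γ)) := by
  rcases hγ.lt_or_gt with hneg | hpos
  · exact Ioo_subset_openSegment ⟨Real.rpow_lt_one_of_one_lt_of_neg hr hneg,
      Real.one_lt_rpow ht (neg_pos.2 hneg)⟩
  · rw [openSegment_symm]
    exact Ioo_subset_openSegment ⟨Real.rpow_lt_one_of_one_lt_of_neg ht (neg_lt_zero.2 hpos),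
      Real.one_lt_rpow hr hpos⟩

lemma mem_openSegment_smul {E : Type*} [AddCommGroup E] [Module ℝ E] {a b : ℝ}
    (h : 1 ∈ openSegment ℝ a b) (y : E) : y ∈ openSegment ℝ (a • y) (b • y) := by
  have himage := mem_image_of_mem (LinearMap.toSpanSingleton ℝ E y).toAffineMap h
  rw [image_openSegment] at himage
  simpa using himage

/-- The filter at `(∞, y, w)` on triples `(v, x, w')`: the scale `v` tends to infinity, `x` stays in
`X` with `x / v ^ γ` tending to `y`, and `w'` tends to `w` within `Ξ`. -/
def scalingFilter (X : Set (Rn n)) (Ξ : Set (Rn m)) (γ : ℝ) (y : Rn n) (w : Rn m) :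
    Filter (ℝ × Rn n × Rn m) :=
  comap (fun p => (p.1, (p.2.1, (p.1 ^ γ)⁻¹ • p.2.1), p.2.2))
    (atTop ×ˢ (𝓟 X ×ˢ 𝓝 y) ×ˢ 𝓝[Ξ] w)

instance : (scalingFilter X Ξ γ y w).IsCountablyGenerated := by
  unfold scalingFilter
  infer_instance

lemma tendsto_scalingFilter_iff {a : ι → Rn n × Rn m} :
    Tendsto (fun i => (u i, a i)) l (scalingFilter X Ξ γ y w) ↔
      ScalesTo X γ u (fun i => (a i).1) l y ∧ Tendsto (fun i => (a i).2) l (𝓝[Ξ] w) := by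
  simp only [scalingFilter, tendsto_comap_iff, tendsto_prod_iff', Function.comp_def,
    tendsto_principal]
  exact ⟨fun ⟨hu, ⟨hmem, hlim⟩, hw⟩ => ⟨⟨hu, hmem, hlim⟩, hw⟩,
    fun ⟨⟨hu, hmem, hlim⟩, hw⟩ => ⟨hu, ⟨hmem, hlim⟩, hw⟩⟩

namespace CondA1

lemma tendsto_of_scalesTo_id (hA1 : CondA1 X Ξ g γ ρ gs) (hcone : IsPosCone Ξ)
    {x : ℝ → Rn n} (hx : ScalesTo X γ id x atTop y) (hw : w ∈ Ξ) {w' : ℝ → Rn m}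
    (hw' : Tendsto w' atTop (𝓝[Ξ] w)) :
    Tendsto (fun v => g (x v) (v • w' v) / v ^ ρ) atTop (𝓝 (gs y w)) := by
  classical
  obtain ⟨v₀, hv₀⟩ := hx.mem.exists
  obtain ⟨hw'lim, hw'Ξ⟩ := tendsto_nhdsWithin_iff.1 hw'
  have hxeq : (fun v => if x v ∈ X then x v else x v₀) =ᶠ[atTop] x :=
    hx.mem.mono fun _ hv => if_pos hv
  have hweq : (fun v => v • if w' v ∈ Ξ then w' v else w) =ᶠ[atTop] fun v => v • w' v :=
    hw'Ξ.mono fun v hv => by simp only [hv, if_true]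
  refine (hA1.2 y hx.mem_asymCone w hw (fun v => if x v ∈ X then x v else x v₀)
    (fun v => v • if w' v ∈ Ξ then w' v else w) (fun v _ => ?_) (fun v hv => hcone v hv _ ?_)
    ?_ ?_).congr' ?_
  · split_ifs with h
    exacts [h, hv₀]
  · split_ifs with h
    exacts [h, hw]
  · refine hx.tendsto.congr' ?_
    filter_upwards [hxeq] with v hv
    rw [hv, id_eq]
  · refine hw'lim.congr' ?_
    filter_upwards [hweq, eventually_ne_atTop 0] with v hv hv0
    rw [hv, inv_smul_smul₀ hv0]
  · filter_upwards [hxeq, hweq] with v hxv hwv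
    rw [hxv, hwv]

lemma tendsto_prod (hA1 : CondA1 X Ξ g γ ρ gs) (hreg : GRegular X Ξ g) (hγ : γ ≠ 0)
    (hx : ScalesTo X γ u x l y) (hw : w ∈ Ξ) :
    Tendsto (fun p : ι × Rn m => g (x p.1) (u p.1 • p.2) / u p.1 ^ ρ) (l ×ˢ 𝓝[Ξ] w)
      (𝓝 (gs y w)) := by
  obtain ⟨hne, hcl, hconv, -, -, hcone, -⟩ := hreg
  rcases l.eq_or_neBot with rfl | _
  · simp only [bot_prod, tendsto_bot]
  obtain ⟨x₀, hx₀⟩ := exists_scalesTo hcl hconv hne hγ hx.mem_asymCone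
  have hconst : Tendsto (fun _ : ℝ => w) atTop (𝓝[Ξ] w) :=
    tendsto_nhdsWithin_iff.2 ⟨tendsto_const_nhds, Eventually.of_forall fun _ => hw⟩
  have hlim : Tendsto (fun p => g p.2.1 (p.1 • p.2.2) / p.1 ^ ρ) (scalingFilter X Ξ γ y w)
      (𝓝 (gs y w)) := by
    have hfst : Tendsto Prod.fst (scalingFilter X Ξ γ y w) atTop :=
      (tendsto_scalingFilter_iff (u := Prod.fst) (a := Prod.snd).1 tendsto_id).1.atTop
    refine tendsto_of_forall_tendsto_graph hfst (a₀ := fun v => (x₀ v, w))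
      (tendsto_scalingFilter_iff.2 ⟨hx₀, hconst⟩) fun a ha => ?_
    obtain ⟨hax, haw⟩ := tendsto_scalingFilter_iff.1 ha
    exact hA1.tendsto_of_scalesTo_id hcone hax hw haw
  exact hlim.comp (tendsto_scalingFilter_iff (a := fun p => (x p.1, p.2)).2
    ⟨⟨hx.atTop.comp tendsto_fst, tendsto_fst.eventually hx.mem, hx.tendsto.comp tendsto_fst⟩,
      tendsto_snd⟩)

lemma eventually_pos (hA1 : CondA1 X Ξ g γ ρ gs) (hreg : GRegular X Ξ g) (hγ : γ ≠ 0)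
    (hx : ScalesTo X γ u x l y) (hw : w ∈ Ξ) (hpos : 0 < gs y w) :
    ∀ᶠ p in l ×ˢ 𝓝[Ξ] w, 0 < g (x p.1) (u p.1 • p.2) := by
  filter_upwards [(hA1.tendsto_prod hreg hγ hx hw).eventually_const_lt hpos,
    (hx.atTop.comp tendsto_fst).eventually_gt_atTop 0] with p hp hu
  exact (div_pos_iff_of_pos_right (Real.rpow_pos_of_pos hu ρ)).1 hp

lemma eventually_neg (hA1 : CondA1 X Ξ g γ ρ gs) (hreg : GRegular X Ξ g) (hγ : γ ≠ 0)
    (hx : ScalesTo X γ u x l y) (hw : w ∈ Ξ) (hneg : gs y w < 0) :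
    ∀ᶠ p in l ×ˢ 𝓝[Ξ] w, g (x p.1) (u p.1 • p.2) < 0 := by
  filter_upwards [(hA1.tendsto_prod hreg hγ hx hw).eventually_lt_const hneg,
    (hx.atTop.comp tendsto_fst).eventually_gt_atTop 0] with p hp hu
  exact neg_of_div_neg_left hp (Real.rpow_nonneg hu.le ρ)

lemma tendsto_const_right (hA1 : CondA1 X Ξ g γ ρ gs) (hreg : GRegular X Ξ g) (hγ : γ ≠ 0)
    (hx : ScalesTo X γ u x l y) (hw : w ∈ Ξ) :
    Tendsto (fun i => g (x i) (u i • w) / u i ^ ρ) l (𝓝 (gs y w)) :=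
  (hA1.tendsto_prod hreg hγ hx hw).comp (tendsto_id.prodMk
    (tendsto_nhdsWithin_iff.2 ⟨tendsto_const_nhds, Eventually.of_forall fun _ => hw⟩))

lemma limit_rpow_smul_smul (hA1 : CondA1 X Ξ g γ ρ gs) (hreg : GRegular X Ξ g) (hγ : γ ≠ 0)
    (hy : y ∈ asymCone X γ) (hw : w ∈ Ξ) {t : ℝ} (ht : 0 < t) :
    gs (t ^ γ • y) (t • w) = t ^ ρ * gs y w := by
  obtain ⟨hne, hcl, hconv, -, -, hcone, -⟩ := id hreg
  obtain ⟨x, hx⟩ := exists_scalesTo hcl hconv hne hγ hy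
  refine tendsto_nhds_unique
    (hA1.tendsto_const_right hreg hγ (hx.div_const ht) (hcone t ht w hw))
    (((hA1.tendsto_const_right hreg hγ hx hw).const_mul (t ^ ρ)).congr' ?_)
  filter_upwards [eventually_gt_atTop 0] with v hv
  rw [id_eq, smul_smul, div_mul_cancel₀ v ht.ne', Real.div_rpow hv.le ht.le]
  field_simp

lemma limit_smul (hA1 : CondA1 X Ξ g γ ρ gs) (hreg : GRegular X Ξ g) (hγ : γ ≠ 0)
    (hy : y ∈ asymCone X γ) (hw : w ∈ Ξ) {t : ℝ} (ht : 0 < t) :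
    gs y (t • w) = t ^ ρ * gs (t ^ (-γ) • y) w := by
  obtain ⟨hne, hcl, hconv, -⟩ := id hreg
  have hy' : t ^ (-γ) • y ∈ asymCone X γ := by
    rw [Real.rpow_neg ht.le, ← Real.inv_rpow ht.le]
    exact rpow_smul_mem_asymCone hcl hconv hne hγ hy (inv_pos.2 ht)
  rw [← hA1.limit_rpow_smul_smul hreg hγ hy' hw ht, smul_smul, ← Real.rpow_add ht,
    add_neg_cancel, Real.rpow_zero, one_smul]

lemma convexOn_limit (hA1 : CondA1 X Ξ g γ ρ gs) (hreg : GRegular X Ξ g) (hγ : γ ≠ 0)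
    (hw : w ∈ Ξ) : ConvexOn ℝ (asymCone X γ) (fun y => gs y w) := by
  obtain ⟨hne, hcl, hconv, -, -, hcone, hgconv, -⟩ := id hreg
  refine ⟨convex_asymCone hcl hconv hne hγ, fun y hy y' hy' a b ha hb hab => ?_⟩
  obtain ⟨x, hx⟩ := exists_scalesTo hcl hconv hne hγ hy
  obtain ⟨x', hx'⟩ := exists_scalesTo hcl hconv hne hγ hy'
  refine le_of_tendsto_of_tendsto
    (hA1.tendsto_const_right hreg hγ (hx.convex_comb hx' hconv ha hb hab) hw)
    (((hA1.tendsto_const_right hreg hγ hx hw).const_mul a).add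
      ((hA1.tendsto_const_right hreg hγ hx' hw).const_mul b)) ?_
  filter_upwards [hx.mem, hx'.mem, eventually_gt_atTop 0] with v hv hv' hv0
  have hle := (hgconv _ (hcone v hv0 w hw)).2 hv hv' ha hb hab
  have hvρ := Real.rpow_pos_of_pos hv0 ρ
  rw [← mul_div_assoc, ← mul_div_assoc, ← add_div]
  exact div_le_div_of_nonneg_right hle hvρ.le

lemma continuousOn_limit_right (hA1 : CondA1 X Ξ g γ ρ gs) (hy : y ∈ asymCone X γ) :
    ContinuousOn (gs y) Ξ :=
  hA1.1.comp (f := fun w => (y, w)) (by fun_prop) fun _ hw => ⟨hy, hw⟩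

/- As `t → 0⁺`, `gs y (t • w)` tends to `gs y 0 < 0`; take `r = t⁻¹`. -/
lemma exists_limit_rpow_smul_neg (hA1 : CondA1 X Ξ g γ ρ gs) (hreg : GRegular X Ξ g)
    (hγ : γ ≠ 0) (hA3 : CondA3 X γ gs) (hy : y ∈ asymCone X γ \ {0}) (hw : w ∈ Ξ) :
    ∃ r : ℝ, 1 < r ∧ gs (r ^ γ • y) w < 0 := by
  obtain ⟨-, -, -, hΞne, hΞcl, hcone, -⟩ := id hreg
  have hzero := hcone.zero_mem hΞcl hΞne
  have hneg : ∀ᶠ t : ℝ in 𝓝[>] 0, gs y (t • w) < 0 :=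
    ((hA1.continuousOn_limit_right hy.1 0 hzero).tendsto.comp
      (hcone.tendsto_smul_nhdsGT_zero hw)).eventually_lt_const (hA3 y hy)
  obtain ⟨t, hlt, ht0, ht1⟩ := (hneg.and (Ioo_mem_nhdsGT one_pos)).exists
  refine ⟨t⁻¹, (one_lt_inv₀ ht0).2 ht1, ?_⟩
  rw [hA1.limit_smul hreg hγ hy.1 hw ht0] at hlt
  rw [Real.inv_rpow ht0.le, ← Real.rpow_neg ht0.le]
  exact neg_of_mul_neg_right hlt (Real.rpow_nonneg ht0.le ρ)

/- `gs · w` is convex along the ray through `y`, negative at `r ^ γ • y` and nonnegative at `y`,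
hence positive beyond `y`. -/
lemma limit_smul_pos (hA1 : CondA1 X Ξ g γ ρ gs) (hreg : GRegular X Ξ g) (hγ : γ ≠ 0)
    (hA3 : CondA3 X γ gs) (hy : y ∈ asymCone X γ \ {0}) (hw : w ∈ Ξ) (hnonneg : 0 ≤ gs y w)
    {t : ℝ} (ht : 1 < t) : 0 < gs y (t • w) := by
  obtain ⟨hne, hcl, hconv, -⟩ := id hreg
  obtain ⟨r, hr, hneg⟩ := hA1.exists_limit_rpow_smul_neg hreg hγ hA3 hy hw
  have ht0 : 0 < t := one_pos.trans ht
  have hcone {c : ℝ} (hc : 0 < c) : c ^ γ • y ∈ asymCone X γ :=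
    rpow_smul_mem_asymCone hcl hconv hne hγ hy.1 hc
  have hty : t ^ (-γ) • y ∈ asymCone X γ := by
    simpa only [Real.inv_rpow ht0.le, ← Real.rpow_neg ht0.le] using hcone (inv_pos.2 ht0)
  rw [hA1.limit_smul hreg hγ hy.1 hw ht0]
  refine mul_pos (Real.rpow_pos_of_pos ht0 ρ) (hnonneg.trans_lt ?_)
  exact (hA1.convexOn_limit hreg hγ hw).lt_right_of_left_lt (hcone (one_pos.trans hr)) hty
    (mem_openSegment_smul (one_mem_openSegment_rpow hγ hr ht) y) (hneg.trans_le hnonneg)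

lemma limit_zero_pos (hA1 : CondA1 X Ξ g γ ρ gs) (hreg : GRegular X Ξ g) (hγ : 0 < γ)
    (hA3 : CondA3 X γ gs) (hy : y ∈ asymCone X γ \ {0}) (hzero : (0 : Rn n) ∈ asymCone X γ)
    (hw : w ∈ Ξ) (hnonneg : 0 ≤ gs y w) : 0 < gs 0 w := by
  obtain ⟨hne, hcl, hconv, -⟩ := id hreg
  obtain ⟨r, hr, hneg⟩ := hA1.exists_limit_rpow_smul_neg hreg hγ.ne' hA3 hy hw
  have hry := rpow_smul_mem_asymCone hcl hconv hne hγ.ne' hy.1 (one_pos.trans hr)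
  have hseg : (1 : ℝ) ∈ openSegment ℝ (r ^ γ) 0 := by
    rw [openSegment_symm]
    exact Ioo_subset_openSegment ⟨one_pos, Real.one_lt_rpow hr hγ⟩
  have hyseg := mem_openSegment_smul hseg y
  rw [zero_smul] at hyseg
  exact hnonneg.trans_lt ((hA1.convexOn_limit hreg hγ.ne' hw).lt_right_of_left_lt hry hzero hyseg
    (hneg.trans_le hnonneg))

end CondA1

lemma pos_of_pos_smul (hreg : GRegular X Ξ g) (hzero : (0 : Rn n) ∈ X) {z : Rn m} (hz : z ∈ Ξ)
    (hg : g 0 z ≤ 0) {p : Rn n} (hp : p ∈ X) {t : ℝ} (ht : t ∈ Icc (0 : ℝ) 1)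
    (hpos : 0 < g (t • p) z) : 0 < g p z := by
  obtain ⟨-, -, -, -, -, -, hgconv, -⟩ := hreg
  have hle := (hgconv z hz).2 hp hzero ht.1 (sub_nonneg.2 ht.2) (add_sub_cancel t 1)
  simp only [smul_zero, add_zero, smul_eq_mul] at hle
  nlinarith [ht.1, ht.2]

lemma exists_pos_of_mem_of_pos (hreg : GRegular X Ξ g) (hγ : 0 < γ) (hA1 : CondA1 X Ξ g γ ρ gs)
    (hA2 : CondA2 X γ) (hA3 : CondA3 X γ gs) (hA4 : CondA4 X Ξ γ gs) {p : Rn n} (hp : p ∈ X) :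
    ∃ z ∈ Ξ, 0 < g p z := by
  obtain ⟨-, -, -, -, -, hcone, -⟩ := id hreg
  obtain ⟨y, hy⟩ := hA2
  obtain ⟨w, hw, hwpos⟩ := hA4 y hy
  have hscale : ScalesTo X γ id (fun _ : ℝ => p) atTop 0 :=
    ⟨tendsto_id, Eventually.of_forall fun _ => hp, by
      simpa using (tendsto_rpow_atTop hγ).inv_tendsto_atTop.smul_const p⟩
  have hzero := hA1.limit_zero_pos hreg hγ hA3 hy hscale.mem_asymCone hw hwpos.le
  have hgpos := (hA1.eventually_pos hreg hγ.ne' hscale hw hzero).curry.mono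
    fun _ h => h.self_of_nhdsWithin hw
  obtain ⟨v, hgv, hv⟩ := (hgpos.and (eventually_gt_atTop 0)).exists
  exact ⟨v • w, hcone v hv w hw, hgv⟩

lemma exists_pos_of_mem_of_neg (hreg : GRegular X Ξ g) (hγ : γ < 0) (hA1 : CondA1 X Ξ g γ ρ gs)
    (hA4 : CondA4 X Ξ γ gs) (hA5 : CondA5 Ξ g γ) (hzero : (0 : Rn n) ∈ X) {p : Rn n}
    (hp : p ∈ X) (hp0 : p ≠ 0) : ∃ z ∈ Ξ, 0 < g p z := by
  obtain ⟨-, -, hconv, -, -, hcone, -⟩ := id hreg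
  have hunit {v : ℝ} (hv : 1 ≤ v) : v ^ γ ∈ Icc (0 : ℝ) 1 :=
    ⟨by positivity, Real.rpow_le_one_of_one_le_of_nonpos hv hγ.le⟩
  have hscale : ScalesTo X γ id (fun v : ℝ => v ^ γ • p) atTop p :=
    ⟨tendsto_id, (eventually_ge_atTop 1).mono fun v hv =>
        hconv.smul_mem_of_zero_mem hzero hp (hunit hv),
      tendsto_const_nhds.congr' ((eventually_gt_atTop 0).mono fun v hv =>
        (inv_smul_smul₀ (Real.rpow_pos_of_pos hv γ).ne' p).symm)⟩
  obtain ⟨w, hw, hwpos⟩ := hA4 p ⟨hscale.mem_asymCone, hp0⟩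
  have hgpos := (hA1.eventually_pos hreg hγ.ne hscale hw hwpos).curry.mono
    fun _ h => h.self_of_nhdsWithin hw
  obtain ⟨v, hgv, hv⟩ := (hgpos.and (eventually_ge_atTop 1)).exists
  have hvw := hcone v (one_pos.trans_le hv) w hw
  exact ⟨v • w, hvw, pos_of_pos_smul hreg hzero hvw (hA5 hγ _ hvw) hp (hunit hv) hgv⟩

end LimitFunction

section RegularVariation

variable {d : ℕ} {Z : Set (Rn d)} {f : Rn d → ℝ} {h : ℝ → ℝ} {fstar : Rn d → ℝ} {κ : ℝ}
  {w : Rn d}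

namespace MultiRegVary

lemma eventually_prod_lt (hf : MultiRegVary Z f h fstar) (hh : RegVary h κ) (hw : w ∈ Z) {J : ℝ}
    (hJ : J < fstar w) : ∀ᶠ p in atTop ×ˢ 𝓝[Z] w, J * h p.1 < f (p.1 • p.2) := by
  filter_upwards [(hf.tendsto_prod hw).eventually_const_lt hJ,
    tendsto_fst.eventually (eventually_gt_atTop 0)] with p hp hp0
  exact (lt_div_iff₀ (hh.1 _ hp0)).1 hp

lemma eventually_prod_gt (hf : MultiRegVary Z f h fstar) (hh : RegVary h κ) (hw : w ∈ Z) {J : ℝ}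
    (hJ : fstar w < J) : ∀ᶠ p in atTop ×ˢ 𝓝[Z] w, f (p.1 • p.2) < J * h p.1 := by
  filter_upwards [(hf.tendsto_prod hw).eventually_lt_const hJ,
    tendsto_fst.eventually (eventually_gt_atTop 0)] with p hp hp0
  exact (div_lt_iff₀ (hh.1 _ hp0)).1 hp

lemma limit_smul (hf : MultiRegVary Z f h fstar) (hh : RegVary h κ) (hcone : IsPosCone Z)
    (hw : w ∈ Z) {t : ℝ} (ht : 0 < t) : fstar (t • w) = t ^ κ * fstar w := by
  have hray {z : Rn d} (hz : z ∈ Z) :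
      Tendsto (fun u : ℝ => f (u • z) / h u) atTop (𝓝 (fstar z)) :=
    hf.2.2.2 z hz _ (fun _ _ => hz) tendsto_const_nhds
  have hscaled := (hray hw).comp (tendsto_id.atTop_mul_const ht)
  refine tendsto_nhds_unique (hray (hcone t ht w hw)) (((hh.2 t ht).mul hscaled).congr' ?_)
  filter_upwards [eventually_gt_atTop 0] with u hu
  have hut := hh.1 _ (mul_pos hu ht)
  simp only [Function.comp_apply, id_eq, smul_smul]
  field_simp

/- Homogeneity reduces this to the compact set of unit vectors of `Z`. -/
lemma exists_mul_rpow_norm_le (hf : MultiRegVary Z f h fstar) (hh : RegVary h κ) (hκ : 0 < κ)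
    (hcl : IsClosed Z) (hcone : IsPosCone Z) (hpos : ∀ z ∈ Z, ‖z‖ = 1 → 0 < fstar z) :
    ∃ c > 0, ∀ w ∈ Z, c * ‖w‖ ^ κ ≤ fstar w := by
  have hsphere : IsCompact (Metric.sphere (0 : Rn d) 1 ∩ Z) :=
    (isCompact_sphere 0 1).inter_right hcl
  obtain ⟨c, hc, hcle⟩ : ∃ c > 0, ∀ w ∈ Metric.sphere (0 : Rn d) 1 ∩ Z, c ≤ fstar w := by
    rcases (Metric.sphere (0 : Rn d) 1 ∩ Z).eq_empty_or_nonempty with hempty | hne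
    · exact ⟨1, one_pos, by simp only [hempty, mem_empty_iff_false, false_imp_iff, implies_true]⟩
    · obtain ⟨w, hw, hmin⟩ :=
        hsphere.exists_isMinOn hne (hf.2.2.1.mono inter_subset_right)
      exact ⟨fstar w, hpos w hw.2 (mem_sphere_zero_iff_norm.1 hw.1), hmin⟩
  refine ⟨c, hc, fun w hw => ?_⟩
  rcases eq_or_ne w 0 with rfl | hw0
  · simpa only [norm_zero, Real.zero_rpow hκ.ne', mul_zero] using hf.2.1 0 hw
  have hwpos := norm_pos_iff.2 hw0
  have hunit : ‖w‖⁻¹ • w ∈ Metric.sphere (0 : Rn d) 1 ∩ Z :=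
    ⟨mem_sphere_zero_iff_norm.2 (norm_smul_inv_norm hw0), hcone _ (inv_pos.2 hwpos) w hw⟩
  calc c * ‖w‖ ^ κ ≤ ‖w‖ ^ κ * fstar (‖w‖⁻¹ • w) := by
        rw [mul_comm]; gcongr; exact hcle _ hunit
    _ = fstar w := by
        rw [← hf.limit_smul hh hcone hunit.2 hwpos, smul_inv_smul₀ hwpos.ne']

/- On unit vectors `f (u • t • w) / h u → t ^ κ * fstar w < δ * fstar w`, uniformly by
compactness. -/
lemma exists_forall_smul_le_mul (hf : MultiRegVary Z f h fstar) (hh : RegVary h κ)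
    (hcl : IsClosed Z) (hcone : IsPosCone Z) (hpos : ∀ z ∈ Z, ‖z‖ = 1 → 0 < fstar z) {t δ : ℝ}
    (ht : 0 < t) (hδ : t ^ κ < δ) : ∃ R : ℝ, ∀ z ∈ Z, R ≤ ‖z‖ → f (t • z) ≤ δ * f z := by
  have hsphere : IsCompact (Metric.sphere (0 : Rn d) 1 ∩ Z) :=
    (isCompact_sphere 0 1).inter_right hcl
  have hunif : ∀ᶠ u : ℝ in atTop, ∀ w ∈ Metric.sphere (0 : Rn d) 1 ∩ Z,
      f (u • t • w) ≤ δ * f (u • w) := by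
    refine eventually_forall_mem_of_isCompact hsphere inter_subset_right fun w hw => ?_
    have hlt : fstar (t • w) < δ * fstar w := by
      rw [hf.limit_smul hh hcone hw.2 ht]
      exact mul_lt_mul_of_pos_right hδ (hpos w hw.2 (mem_sphere_zero_iff_norm.1 hw.1))
    have hsmul : Tendsto (fun w' : Rn d => t • w') (𝓝[Z] w) (𝓝[Z] (t • w)) :=
      (continuous_const_smul t).continuousWithinAt.tendsto_nhdsWithin fun z hz => hcone t ht z hz
    have hscaled := (hf.tendsto_prod (hcone t ht w hw.2)).comp (tendsto_id.prodMap hsmul)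
    filter_upwards [hscaled.eventually_lt ((hf.tendsto_prod hw.2).const_mul δ) hlt,
      tendsto_fst.eventually (eventually_gt_atTop 0)] with p hp hp0
    rw [← mul_div_assoc] at hp
    exact ((div_lt_div_iff_of_pos_right (hh.1 _ hp0)).1 hp).le
  obtain ⟨R, hR⟩ := eventually_atTop.1 hunif
  refine ⟨max R 1, fun z hz hRz => ?_⟩
  have hzpos : 0 < ‖z‖ := one_pos.trans_le ((le_max_right R 1).trans hRz)
  have hunit : ‖z‖⁻¹ • z ∈ Metric.sphere (0 : Rn d) 1 ∩ Z :=
    ⟨mem_sphere_zero_iff_norm.2 (norm_smul_inv_norm (norm_pos_iff.1 hzpos)),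
      hcone _ (inv_pos.2 hzpos) z hz⟩
  simpa only [smul_comm t, smul_inv_smul₀ hzpos.ne'] using
    hR ‖z‖ ((le_max_left R 1).trans hRz) _ hunit

end MultiRegVary

lemma exists_smul_norm_mem_Icc_two_mul (hcone : IsPosCone Z) {N : ℝ} (hN : 0 < N)
    (hhalf : ∀ z ∈ Z, N ≤ ‖z‖ → f ((2⁻¹ : ℝ) • z) ≤ f z) {z : Rn d} (hz : z ∈ Z)
    (hNz : N ≤ ‖z‖) : ∃ t : ℝ, 0 < t ∧ ‖t • z‖ ∈ Icc N (2 * N) ∧ f (t • z) ≤ f z := by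
  obtain ⟨k, hk, hk'⟩ := exists_nat_pow_near ((one_le_div hN).2 hNz) one_lt_two
  rw [le_div_iff₀ hN] at hk
  rw [div_lt_iff₀ hN] at hk'
  have hnorm (j : ℕ) : ‖((2⁻¹ : ℝ) ^ j) • z‖ = ‖z‖ / 2 ^ j := by
    rw [norm_smul, norm_pow, norm_inv, Real.norm_ofNat, inv_pow, inv_mul_eq_div]
  have hdescend : ∀ j ≤ k, f (((2⁻¹ : ℝ) ^ j) • z) ≤ f z := by
    intro j hj
    induction j with
    | zero => rw [pow_zero, one_smul]
    | succ j ih =>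
      have hle : N ≤ ‖((2⁻¹ : ℝ) ^ j) • z‖ := by
        rw [hnorm, le_div_iff₀ (by positivity), mul_comm]
        refine le_trans ?_ hk
        gcongr <;> [norm_num; omega]
      rw [pow_succ', mul_smul]
      exact (hhalf _ (hcone _ (by positivity) z hz) hle).trans (ih (by omega))
  refine ⟨2⁻¹ ^ k, by positivity, ⟨?_, ?_⟩, hdescend k le_rfl⟩
  · rwa [hnorm, le_div_iff₀ (by positivity), mul_comm]
  · rw [hnorm, div_le_iff₀ (by positivity)]
    exact hk'.le.trans_eq (by ring)

/- Halving decreases `f` far out, so the bound on an annulus propagates to its exterior. -/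
lemma MultiRegVary.exists_forall_mul_le (hf : MultiRegVary Z f h fstar) (hh : RegVary h κ)
    (hκ : 0 < κ) (hcl : IsClosed Z) (hcone : IsPosCone Z)
    (hpos : ∀ z ∈ Z, ‖z‖ = 1 → 0 < fstar z) (J : ℝ) :
    ∃ B : ℝ, ∀ᶠ u in atTop, ∀ w ∈ Z, B ≤ ‖w‖ → J * h u ≤ f (u • w) := by
  obtain ⟨c, hc, hlow⟩ := hf.exists_mul_rpow_norm_le hh hκ hcl hcone hpos
  obtain ⟨B, hB, hJB⟩ := ((eventually_gt_atTop 0).and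
    (((tendsto_rpow_atTop hκ).const_mul_atTop hc).eventually_gt_atTop J)).exists
  obtain ⟨R, hhalf⟩ := hf.exists_forall_smul_le_mul hh hcl hcone hpos (t := 2⁻¹) (δ := 1)
    (by norm_num) (Real.rpow_lt_one (by norm_num) (by norm_num) hκ)
  have hannulus : IsCompact ({w | ‖w‖ ∈ Icc B (2 * B)} ∩ Z) := by
    refine ((isCompact_closedBall (0 : Rn d) (2 * B)).of_isClosed_subset
      (isClosed_Icc.preimage continuous_norm) fun w hw => ?_).inter_right hcl
    exact mem_closedBall_zero_iff.2 hw.2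
  have hunif : ∀ᶠ u in atTop, ∀ w ∈ {w | ‖w‖ ∈ Icc B (2 * B)} ∩ Z, J * h u < f (u • w) := by
    refine eventually_forall_mem_of_isCompact hannulus inter_subset_right fun w hw =>
      hf.eventually_prod_lt hh hw.2 ?_
    calc J < c * B ^ κ := hJB
      _ ≤ c * ‖w‖ ^ κ := by gcongr; exact hw.1.1
      _ ≤ fstar w := hlow w hw.2
  refine ⟨B, ?_⟩
  filter_upwards [hunif, eventually_gt_atTop 0, eventually_ge_atTop (R / B)]
    with u hu hu0 huR w hw hBw
  have hhalf' : ∀ z ∈ Z, B ≤ ‖z‖ → f (u • (2⁻¹ : ℝ) • z) ≤ f (u • z) := fun z hz hBz => by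
    have hR : R ≤ ‖u • z‖ := by
      rw [norm_smul, Real.norm_of_nonneg hu0.le]
      exact ((div_le_iff₀ hB).1 huR).trans (by gcongr)
    rw [smul_comm]
    exact (hhalf _ (hcone u hu0 z hz) hR).trans_eq (one_mul _)
  obtain ⟨t, ht, hnorm, hle⟩ :=
    exists_smul_norm_mem_Icc_two_mul (f := fun z => f (u • z)) hcone hB hhalf' hw hBw
  exact (hu _ ⟨hnorm, hcone t ht w hw⟩).le.trans hle

end RegularVariation

section Measure

lemma lintegral_comp_const_smul {E : Type*} [NormedAddCommGroup E] [NormedSpace ℝ E]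
    [FiniteDimensional ℝ E] [MeasurableSpace E] [BorelSpace E] (μ : Measure E) [μ.IsAddHaarMeasure]
    (F : E → ENNReal) {t : ℝ} (ht : t ≠ 0) :
    ∫⁻ z, F (t • z) ∂μ = ENNReal.ofReal |(t ^ Module.finrank ℝ E)⁻¹| * ∫⁻ z, F z ∂μ := by
  rw [← smul_eq_mul, ← lintegral_smul_measure, ← Measure.map_addHaar_smul μ ht]
  exact (lintegral_map_equiv F (Homeomorph.smulOfNeZero t ht).toMeasurableEquiv).symm

variable {d : ℕ} {P : Measure (Rn d)} {Ξ D : Set (Rn d)} {Q : Rn d → ℝ} {q : ℝ → ℝ}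
  {lam : Rn d → ℝ} {α θ M : ℝ}

namespace Assumption1

lemma measure_inter (h : Assumption1 P Ξ Q q lam α) (A : Set (Rn d)) : P (A ∩ Ξ) = P A := by
  obtain ⟨hP, -, hcl, -, hP1, -⟩ := h
  exact measure_inter_conull ((prob_compl_eq_zero_iff hcl.measurableSet).2 hP1)

lemma measure_ball_inter_pos (h : Assumption1 P Ξ Q q lam α) {z : Rn d} (hz : z ∈ Ξ) {r : ℝ}
    (hr : 0 < r) : 0 < P (Metric.ball z r ∩ Ξ) := by
  rw [h.measure_inter, pos_iff_ne_zero]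
  intro hnull
  obtain ⟨hP, -, -, -, -, hsup, -⟩ := h
  exact hsup _ Metric.isOpen_ball.isClosed_compl
    ((prob_compl_eq_one_iff measurableSet_ball).2 hnull) hz (Metric.mem_ball_self hr)

lemma volume_ball_inter_pos (h : Assumption1 P Ξ Q q lam α) {z : Rn d} (hz : z ∈ Ξ) {r : ℝ}
    (hr : 0 < r) : 0 < volume (Metric.ball z r ∩ Ξ) := by
  have hac : P ≪ volume := by
    obtain ⟨-, -, -, -, -, -, hden, -⟩ := id h
    exact hden ▸ withDensity_absolutelyContinuous _ _
  exact pos_iff_ne_zero.2 fun hnull => (h.measure_ball_inter_pos hz hr).ne' (hac hnull)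

lemma measure_eq_setLIntegral (h : Assumption1 P Ξ Q q lam α) (hD : MeasurableSet D)
    (hDΞ : D ⊆ Ξ) : P D = ∫⁻ z in D, ENNReal.ofReal (Real.exp (-Q z)) := by
  obtain ⟨-, -, -, -, -, -, hden, -⟩ := h
  rw [hden, withDensity_apply _ hD]
  exact setLIntegral_congr_fun hD fun z hz => by simp only [indicator_of_mem (hDΞ hz)]

lemma ofReal_exp_mul_volume_le (h : Assumption1 P Ξ Q q lam α) (hD : MeasurableSet D)
    (hDΞ : D ⊆ Ξ) (hQ : ∀ z ∈ D, Q z ≤ M) :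
    ENNReal.ofReal (Real.exp (-M)) * volume D ≤ P D := by
  rw [h.measure_eq_setLIntegral hD hDΞ, ← setLIntegral_const]
  refine setLIntegral_mono' hD fun z hz => ENNReal.ofReal_le_ofReal ?_
  exact Real.exp_le_exp.2 (neg_le_neg (hQ z hz))

open scoped Pointwise in
lemma ofReal_exp_mul_volume_le_smul (h : Assumption1 P Ξ Q q lam α) (hD : MeasurableSet D)
    (hDΞ : D ⊆ Ξ) {t : ℝ} (ht : 1 ≤ t) (hQ : ∀ z ∈ D, Q (t • z) ≤ M) :
    ENNReal.ofReal (Real.exp (-M)) * volume D ≤ P (t • D) := by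
  obtain ⟨-, -, -, hcone, -⟩ := id h
  have ht0 : 0 < t := one_pos.trans_le ht
  have hvol : volume D ≤ volume (t • D) := by
    rw [Measure.addHaar_smul_of_nonneg _ ht0.le]
    exact le_mul_of_one_le_left zero_le (ENNReal.one_le_ofReal.2 (one_le_pow₀ ht))
  calc ENNReal.ofReal (Real.exp (-M)) * volume D
      ≤ ENNReal.ofReal (Real.exp (-M)) * volume (t • D) := by gcongr
    _ ≤ P (t • D) := h.ofReal_exp_mul_volume_le (hD.const_smul₀ t)
        (smul_set_subset_iff.2 fun z hz => hcone t ht0 z (hDΞ hz)) (forall_mem_image.2 hQ)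

/- The integral is dominated by that of a dilation of the density of `P`. -/
lemma setLIntegral_exp_neg_mul_lt_top (h : Assumption1 P Ξ Q q lam α) (hD : MeasurableSet D)
    (hDΞ : D ⊆ Ξ) {t δ : ℝ} (ht : 0 < t) (hQ : ∀ z ∈ D, Q (t • z) ≤ δ * Q z) :
    ∫⁻ z in D, ENNReal.ofReal (Real.exp (-(δ * Q z))) < ⊤ := by
  obtain ⟨-, -, hcl, hcone, hP1, -⟩ := id h
  set F : Rn d → ENNReal := Ξ.indicator fun z => ENNReal.ofReal (Real.exp (-Q z)) with hFdef
  have hF : ∫⁻ z, F z = 1 := by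
    rw [lintegral_indicator hcl.measurableSet,
      ← h.measure_eq_setLIntegral hcl.measurableSet Subset.rfl, hP1]
  calc ∫⁻ z in D, ENNReal.ofReal (Real.exp (-(δ * Q z))) ≤ ∫⁻ z in D, F (t • z) := by
        refine setLIntegral_mono' hD fun z hz => ?_
        rw [hFdef, indicator_of_mem (hcone t ht z (hDΞ hz))]
        gcongr
        exact hQ z hz
    _ ≤ ∫⁻ z, F (t • z) := setLIntegral_le_lintegral _ _
    _ < ⊤ := by
        rw [lintegral_comp_const_smul _ _ ht.ne', hF, mul_one]
        exact ENNReal.ofReal_lt_top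

lemma lintegral_exp_neg_mul_lt_top (h : Assumption1 P Ξ Q q lam α) {δ : ℝ} (hδ : 0 < δ) :
    ∫⁻ z in Ξ, ENNReal.ofReal (Real.exp (-(δ * Q z))) < ⊤ := by
  obtain ⟨-, -, hcl, hcone, -, -, -, hα, hq, hM, hlam⟩ := id h
  obtain ⟨t, htδ, ht⟩ : ∃ t : ℝ, t ^ α < δ ∧ 0 < t := by
    have hlim : Tendsto (fun t : ℝ => t ^ α) (𝓝[>] 0) (𝓝 0) := by
      simpa only [Real.zero_rpow hα.ne'] using
        (Real.continuousAt_rpow_const 0 α (Or.inr hα.le)).tendsto.mono_left nhdsWithin_le_nhds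
    exact ((hlim.eventually_lt_const hδ).and self_mem_nhdsWithin).exists
  obtain ⟨R, hR⟩ := hM.exists_forall_smul_le_mul hq hcl hcone hlam ht htδ
  rw [← lintegral_inter_add_sdiff _ Ξ (measurableSet_ball (x := (0 : Rn d)) (ε := R)),
    ENNReal.add_lt_top]
  constructor
  · calc ∫⁻ z in Ξ ∩ Metric.ball 0 R, ENNReal.ofReal (Real.exp (-(δ * Q z)))
        ≤ ∫⁻ _ in Ξ ∩ Metric.ball 0 R, 1 := by
          refine setLIntegral_mono' (hcl.measurableSet.inter measurableSet_ball) fun z hz => ?_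
          rw [ENNReal.ofReal_le_one, Real.exp_le_one_iff, neg_nonpos]
          exact mul_nonneg hδ.le (hM.1 z hz.1)
      _ = volume (Ξ ∩ Metric.ball 0 R) := setLIntegral_one _
      _ < ⊤ := (measure_mono inter_subset_right).trans_lt measure_ball_lt_top
  · exact h.setLIntegral_exp_neg_mul_lt_top (hcl.measurableSet.diff measurableSet_ball)
      sdiff_subset ht fun z hz => hR z hz.1 (not_lt.1 fun hlt => hz.2 (mem_ball_zero_iff.2 hlt))

/- Split `exp (-Q) = exp (-θ * Q) * exp (-(1 - θ) * Q)`: the second factor is integrable. -/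
lemma exists_measure_le_ofReal_exp (h : Assumption1 P Ξ Q q lam α) (hθ : θ ∈ Ico 0 1) :
    ∃ C > 0, ∀ D ⊆ Ξ, MeasurableSet D → ∀ M, (∀ z ∈ D, M ≤ Q z) →
      P D ≤ ENNReal.ofReal (C * Real.exp (-(θ * M))) := by
  set I := ∫⁻ z in Ξ, ENNReal.ofReal (Real.exp (-((1 - θ) * Q z)))
  have hI : I ≠ ⊤ := (h.lintegral_exp_neg_mul_lt_top (sub_pos.2 hθ.2)).ne
  refine ⟨I.toReal + 1, by positivity, fun D hDΞ hD M hQ => ?_⟩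
  calc P D ≤ ∫⁻ z in D, ENNReal.ofReal (Real.exp (-(θ * M))) *
          ENNReal.ofReal (Real.exp (-((1 - θ) * Q z))) := by
        rw [h.measure_eq_setLIntegral hD hDΞ]
        refine setLIntegral_mono' hD fun z hz => ?_
        rw [← ENNReal.ofReal_mul (Real.exp_nonneg _), ← Real.exp_add]
        gcongr
        linarith [mul_le_mul_of_nonneg_left (hQ z hz) hθ.1]
    _ ≤ ENNReal.ofReal (Real.exp (-(θ * M))) * I := by
        rw [lintegral_const_mul' _ _ ENNReal.ofReal_ne_top]
        gcongr
        exact lintegral_mono_set hDΞ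
    _ ≤ ENNReal.ofReal ((I.toReal + 1) * Real.exp (-(θ * M))) := by
        rw [mul_comm, ENNReal.ofReal_mul (by positivity)]
        gcongr
        exact (ENNReal.le_ofReal_iff_toReal_le hI (by positivity)).2 (by linarith)

end Assumption1

end Measure

section Violation

variable {n m : ℕ} {P : Measure (Rn m)} {Ξ : Set (Rn m)} {Q : Rn m → ℝ} {q : ℝ → ℝ}
  {lam : Rn m → ℝ} {α : ℝ} {X : Set (Rn n)} {g : Rn n → Rn m → ℝ} {γ ρ : ℝ}
  {gs : Rn n → Rn m → ℝ} {p : Rn n}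

/-- The violation probability `V(x) = P(g(x, ·) > 0)` of a decision `x`. -/
def violation (P : Measure (Rn m)) (g : Rn n → Rn m → ℝ) (x : Rn n) : ENNReal :=
  P {z | 0 < g x z}

lemma violation_pos (hP : Assumption1 P Ξ Q q lam α) (hreg : GRegular X Ξ g) (hp : p ∈ X)
    (hpos : ∃ z ∈ Ξ, 0 < g p z) : 0 < violation P g p := by
  obtain ⟨-, -, -, -, -, -, -, -, hgcont⟩ := hreg
  obtain ⟨z, hz, hgz⟩ := hpos
  obtain ⟨r, hr, hball⟩ :=
    Metric.mem_nhdsWithin_iff.1 ((hgcont p hp z hz).eventually_const_lt hgz)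
  exact (hP.measure_ball_inter_pos hz hr).trans_le (measure_mono hball)

/- Continuity of `P` from below along the increasing sets of `z` for which `g(·, z)` is positive
on a whole neighbourhood of `p`. -/
lemma lowerSemicontinuousOn_violation (hP : Assumption1 P Ξ Q q lam α) (hreg : GRegular X Ξ g) :
    LowerSemicontinuousOn (violation P g) X := by
  obtain ⟨-, -, -, -, -, -, -, hglsc, -⟩ := hreg
  intro p hp c hc
  obtain ⟨U, hU⟩ := (𝓝[X] p).exists_antitone_basis
  set A : ℕ → Set (Rn m) := fun k => {z | ∀ v ∈ U k, 0 < g v z}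
  have hA : Monotone A := fun j k hjk z hz v hv => hz v (hU.2 hjk hv)
  have hsub : {z | 0 < g p z} ∩ Ξ ⊆ ⋃ k, A k := fun z hz => by
    obtain ⟨k, -, hk⟩ := hU.1.mem_iff.1 (hglsc z hz.2 p hp 0 hz.1)
    exact mem_iUnion.2 ⟨k, hk⟩
  have hc' : c < ⨆ k, P (A k) := by
    rw [← hA.measure_iUnion]
    exact hc.trans_le ((hP.measure_inter _).symm.trans_le (measure_mono hsub))
  obtain ⟨k, hk⟩ := lt_iSup_iff.1 hc'
  filter_upwards [hU.1.mem_of_mem trivial (i := k)] with v hv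
  exact hk.trans_le (measure_mono fun z hz => hz v hv)

lemma exists_forall_le_violation_of_isCompact (hP : Assumption1 P Ξ Q q lam α)
    (hreg : GRegular X Ξ g) {K : Set (Rn n)} (hK : IsCompact K) (hKX : K ⊆ X)
    (hpos : ∀ p ∈ K, ∃ z ∈ Ξ, 0 < g p z) : ∃ c > 0, ∀ p ∈ K, c ≤ violation P g p := by
  rcases K.eq_empty_or_nonempty with rfl | hne
  · exact ⟨1, one_pos, by simp only [mem_empty_iff_false, false_imp_iff, implies_true]⟩
  · obtain ⟨p, hp, hmin⟩ :=
      ((lowerSemicontinuousOn_violation hP hreg).mono hKX).exists_isMinOn hne hK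
    exact ⟨_, violation_pos hP hreg (hKX hp) (hpos p hp), hmin⟩

lemma violation_smul_le (hP : Assumption1 P Ξ Q q lam α) (hreg : GRegular X Ξ g)
    (hzero : (0 : Rn n) ∈ X) (hg : ∀ z ∈ Ξ, g 0 z ≤ 0) (hp : p ∈ X) {t : ℝ}
    (ht : t ∈ Icc (0 : ℝ) 1) : violation P g (t • p) ≤ violation P g p := by
  rw [violation, ← hP.measure_inter]
  exact measure_mono fun z hz => pos_of_pos_smul hreg hzero hz.2 (hg z hz.2) hp ht hz.1

lemma violation_zero (hP : Assumption1 P Ξ Q q lam α) (hg : ∀ z ∈ Ξ, g 0 z ≤ 0) :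
    violation P g 0 = 0 := by
  rw [violation, ← hP.measure_inter]
  convert measure_empty (μ := P)
  exact eq_empty_of_forall_notMem fun z hz => (hg z hz.2).not_gt hz.1

lemma exists_forall_le_violation_of_le_norm (hP : Assumption1 P Ξ Q q lam α)
    (hreg : GRegular X Ξ g) (hzero : (0 : Rn n) ∈ X) (hg : ∀ z ∈ Ξ, g 0 z ≤ 0)
    (hpos : ∀ p ∈ X, p ≠ 0 → ∃ z ∈ Ξ, 0 < g p z) {r : ℝ} (hr : 0 < r) :
    ∃ c > 0, ∀ p ∈ X, r ≤ ‖p‖ → c ≤ violation P g p := by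
  obtain ⟨-, hX, hconv, -⟩ := id hreg
  obtain ⟨c, hc, hcle⟩ := exists_forall_le_violation_of_isCompact hP hreg
    ((isCompact_sphere (0 : Rn n) r).inter_right hX) inter_subset_right fun p hp =>
      hpos p hp.2 (ne_zero_of_mem_sphere hr.ne' ⟨p, hp.1⟩)
  refine ⟨c, hc, fun p hp hrp => ?_⟩
  have hp0 : 0 < ‖p‖ := hr.trans_le hrp
  have ht : r / ‖p‖ ∈ Icc (0 : ℝ) 1 := ⟨by positivity, (div_le_one hp0).2 hrp⟩
  refine (hcle _ ⟨?_, hconv.smul_mem_of_zero_mem hzero hp ht⟩).trans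
    (violation_smul_le hP hreg hzero hg hp ht)
  rw [mem_sphere_zero_iff_norm, norm_smul, Real.norm_of_nonneg ht.1, div_mul_cancel₀ _ hp0.ne']

variable {ι : Type*} {l : Filter ι} {v : ι → Rn n}

lemma tendsto_norm_atTop_of_tendsto_violation (hP : Assumption1 P Ξ Q q lam α)
    (hreg : GRegular X Ξ g) (hpos : ∀ p ∈ X, ∃ z ∈ Ξ, 0 < g p z) (hv : ∀ᶠ i in l, v i ∈ X)
    (hviol : Tendsto (fun i => violation P g (v i)) l (𝓝 0)) :
    Tendsto (fun i => ‖v i‖) l atTop := by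
  obtain ⟨-, hX, -⟩ := id hreg
  refine tendsto_atTop.2 fun B => ?_
  obtain ⟨c, hc, hcle⟩ := exists_forall_le_violation_of_isCompact hP hreg
    ((isCompact_closedBall (0 : Rn n) B).inter_right hX) inter_subset_right fun p hp => hpos p hp.2
  filter_upwards [hv, hviol.eventually_lt_const hc] with i hi hlt
  by_contra! hB
  exact hlt.not_ge (hcle _ ⟨mem_closedBall_zero_iff.2 hB.le, hi⟩)

lemma tendsto_norm_nhds_zero_of_tendsto_violation (hP : Assumption1 P Ξ Q q lam α)
    (hreg : GRegular X Ξ g) (hzero : (0 : Rn n) ∈ X) (hg : ∀ z ∈ Ξ, g 0 z ≤ 0)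
    (hpos : ∀ p ∈ X, p ≠ 0 → ∃ z ∈ Ξ, 0 < g p z) (hv : ∀ᶠ i in l, v i ∈ X)
    (hviol : Tendsto (fun i => violation P g (v i)) l (𝓝 0)) :
    Tendsto (fun i => ‖v i‖) l (𝓝 0) := by
  refine (nhds_basis_abs_sub_lt (0 : ℝ)).tendsto_right_iff.2 fun r hr => ?_
  obtain ⟨c, hc, hcle⟩ := exists_forall_le_violation_of_le_norm hP hreg hzero hg hpos hr
  filter_upwards [hv, hviol.eventually_lt_const hc] with i hi hlt
  by_contra! hge
  rw [sub_zero, abs_norm] at hge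
  exact hlt.not_ge (hcle _ hi hge)

lemma tendsto_norm_rpow_of_tendsto_violation (hP : Assumption1 P Ξ Q q lam α)
    (hreg : GRegular X Ξ g) (hγ : γ ≠ 0) (hA1 : CondA1 X Ξ g γ ρ gs) (hA2 : CondA2 X γ)
    (hA3 : CondA3 X γ gs) (hA4 : CondA4 X Ξ γ gs) (hA5 : CondA5 Ξ g γ) (hv : ∀ᶠ i in l, v i ∈ X)
    (hv0 : γ < 0 → ∀ᶠ i in l, v i ≠ 0)
    (hviol : Tendsto (fun i => violation P g (v i)) l (𝓝 0)) :
    Tendsto (fun i => ‖v i‖ ^ γ⁻¹) l atTop := by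
  rcases hγ.lt_or_gt with hneg | hpos
  · obtain ⟨-, hX, -⟩ := id hreg
    have hzero : (0 : Rn n) ∈ X := zero_mem_of_mem_asymCone hX hneg hA2.some_mem.1
    have hnorm := tendsto_norm_nhds_zero_of_tendsto_violation hP hreg hzero (hA5 hneg)
      (fun p => exists_pos_of_mem_of_neg hreg hneg hA1 hA4 hA5 hzero) hv hviol
    exact (tendsto_rpow_neg_nhdsGT_zero (inv_lt_zero.2 hneg)).comp <|
      tendsto_nhdsWithin_iff.2 ⟨hnorm, (hv0 hneg).mono fun i hi => norm_pos_iff.2 hi⟩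
  · exact (tendsto_rpow_atTop (inv_pos.2 hpos)).comp <|
      tendsto_norm_atTop_of_tendsto_violation hP hreg
        (fun p => exists_pos_of_mem_of_pos hreg hpos hA1 hA2 hA3 hA4) hv hviol

end Violation

section LargeDeviations

variable {n m : ℕ} {P : Measure (Rn m)} {Ξ : Set (Rn m)} {Q : Rn m → ℝ} {q : ℝ → ℝ}
  {lam : Rn m → ℝ} {α : ℝ} {X : Set (Rn n)} {g : Rn n → Rn m → ℝ} {γ ρ : ℝ}
  {gs : Rn n → Rn m → ℝ} {ι : Type*} {l : Filter ι} {u : ι → ℝ} {x : ι → Rn n} {y : Rn n}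
  {w : Rn m} {J Λ θ : ℝ}

lemma exists_ball_eventually_forall_pos_and_le (hP : Assumption1 P Ξ Q q lam α)
    (hreg : GRegular X Ξ g) (hγ : γ ≠ 0) (hA1 : CondA1 X Ξ g γ ρ gs)
    (hx : ScalesTo X γ u x l y) (hw : w ∈ Ξ) (hpos : 0 < gs y w) (hΛ : lam w < Λ) :
    ∃ r > 0, ∀ᶠ i in l, ∀ w' ∈ Metric.ball w r ∩ Ξ,
      0 < g (x i) (u i • w') ∧ Q (u i • w') ≤ Λ * q (u i) := by
  obtain ⟨-, -, -, -, -, -, -, -, hq, hM, -⟩ := hP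
  have hQ := (hx.atTop.prodMap tendsto_id).eventually (hM.eventually_prod_gt hq hw hΛ)
  obtain ⟨I, hI, N, hN, hprod⟩ :=
    eventually_prod_iff.1 ((hA1.eventually_pos hreg hγ hx hw hpos).and hQ)
  obtain ⟨r, hr, hball⟩ := Metric.mem_nhdsWithin_iff.1 hN
  exact ⟨r, hr, hI.mono fun i hi w' hw' => (hprod hi (hball hw')).imp_right le_of_lt⟩

/- The violation set contains the dilation by `u` of a small ball around `w`. -/
lemma exists_eventually_le_violation (hP : Assumption1 P Ξ Q q lam α) (hreg : GRegular X Ξ g)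
    (hγ : γ ≠ 0) (hA1 : CondA1 X Ξ g γ ρ gs) (hx : ScalesTo X γ u x l y) (hw : w ∈ Ξ)
    (hpos : 0 < gs y w) (hΛ : lam w < Λ) :
    ∃ κ > 0, ∀ᶠ i in l,
      ENNReal.ofReal (κ * Real.exp (-(Λ * q (u i)))) ≤ violation P g (x i) := by
  obtain ⟨-, -, hcl, -⟩ := id hP
  obtain ⟨r, hr, hball⟩ := exists_ball_eventually_forall_pos_and_le hP hreg hγ hA1 hx hw hpos hΛ
  set D := Metric.ball w r ∩ Ξ
  have hfin : volume D ≠ ⊤ := ((measure_mono inter_subset_left).trans_lt measure_ball_lt_top).ne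
  refine ⟨(volume D).toReal, ENNReal.toReal_pos (hP.volume_ball_inter_pos hw hr).ne' hfin, ?_⟩
  filter_upwards [hball, hx.atTop.eventually_ge_atTop 1] with i hi hu
  rw [mul_comm, ENNReal.ofReal_mul (Real.exp_nonneg _), ENNReal.ofReal_toReal hfin]
  exact (hP.ofReal_exp_mul_volume_le_smul (measurableSet_ball.inter hcl.measurableSet)
    inter_subset_right hu fun w' hw' => (hi w' hw').2).trans
      (measure_mono (forall_mem_image.2 fun w' hw' => (hi w' hw').1))

lemma eventually_forall_mul_le_of_pos (hP : Assumption1 P Ξ Q q lam α) (hreg : GRegular X Ξ g)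
    (hγ : γ ≠ 0) (hA1 : CondA1 X Ξ g γ ρ gs) (hx : ScalesTo X γ u x l y)
    (hJ : ∀ w ∈ Ξ, 0 ≤ gs y w → J < lam w) :
    ∀ᶠ i in l, ∀ z ∈ Ξ, 0 < g (x i) z → J * q (u i) ≤ Q z := by
  obtain ⟨-, -, hcl, hcone, -, -, -, hα, hq, hM, hlam⟩ := hP
  obtain ⟨B, hB⟩ := hM.exists_forall_mul_le hq hα hcl hcone hlam J
  have hcompact : ∀ᶠ i in l, ∀ w ∈ Metric.closedBall 0 B ∩ Ξ,
      0 < g (x i) (u i • w) → J * q (u i) ≤ Q (u i • w) := by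
    refine eventually_forall_mem_of_isCompact ((isCompact_closedBall 0 B).inter_right hcl)
      inter_subset_right fun w hw => ?_
    rcases lt_or_ge (gs y w) 0 with hneg | hnonneg
    · exact (hA1.eventually_neg hreg hγ hx hw.2 hneg).mono fun p hp hpos => (hp.not_gt hpos).elim
    · exact ((hx.atTop.prodMap tendsto_id).eventually
        (hM.eventually_prod_lt hq hw.2 (hJ w hw.2 hnonneg))).mono fun p hp _ => hp.le
  filter_upwards [hcompact, hx.atTop.eventually hB, hx.atTop.eventually_gt_atTop 0]
    with i hnear hfar hu z hz hpos
  have hmem : (u i)⁻¹ • z ∈ Ξ := hcone _ (inv_pos.2 hu) z hz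
  rw [← smul_inv_smul₀ hu.ne' z] at hpos ⊢
  rcases le_total ‖(u i)⁻¹ • z‖ B with hle | hge
  · exact hnear _ ⟨mem_closedBall_zero_iff.2 hle, hmem⟩ hpos
  · exact hfar _ hmem hge

lemma GRegular.measurableSet_pos_inter (hreg : GRegular X Ξ g) {p : Rn n} (hp : p ∈ X) :
    MeasurableSet ({z | 0 < g p z} ∩ Ξ) := by
  obtain ⟨-, -, -, -, hcl, -, -, -, hgcont⟩ := hreg
  obtain ⟨U, hU, heq⟩ := continuousOn_iff'.1 (hgcont p hp) (Ioi 0) isOpen_Ioi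
  exact heq ▸ hU.measurableSet.inter hcl.measurableSet

lemma exists_eventually_violation_le (hP : Assumption1 P Ξ Q q lam α) (hreg : GRegular X Ξ g)
    (hγ : γ ≠ 0) (hA1 : CondA1 X Ξ g γ ρ gs) (hx : ScalesTo X γ u x l y)
    (hJ : ∀ w ∈ Ξ, 0 ≤ gs y w → J < lam w) (hθ : θ ∈ Ico 0 1) :
    ∃ C > 0, ∀ᶠ i in l,
      violation P g (x i) ≤ ENNReal.ofReal (C * Real.exp (-(θ * (J * q (u i))))) := by
  obtain ⟨C, hC, hle⟩ := hP.exists_measure_le_ofReal_exp hθ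
  refine ⟨C, hC, ?_⟩
  filter_upwards [eventually_forall_mul_le_of_pos hP hreg hγ hA1 hx hJ, hx.mem] with i hi hmem
  rw [violation, ← hP.measure_inter]
  exact hle _ inter_subset_right (hreg.measurableSet_pos_inter hmem) _ fun z hz => hi z hz.2 hz.1

/-- The rate at which the violation probability decays in the asymptotic direction `y`, measured
in units of `q`: the infimum of `lam` over the asymptotic violation set `{w ∈ Ξ | 0 ≤ gs y w}`. -/
def limitRate (Ξ : Set (Rn m)) (lam : Rn m → ℝ) (gs : Rn n → Rn m → ℝ) (y : Rn n) : ℝ :=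
  sInf (lam '' {w ∈ Ξ | 0 ≤ gs y w})

lemma limitRate_le (hP : Assumption1 P Ξ Q q lam α) (hw : w ∈ Ξ) (hnonneg : 0 ≤ gs y w) :
    limitRate Ξ lam gs y ≤ lam w := by
  obtain ⟨-, -, -, -, -, -, -, -, -, hM, -⟩ := hP
  exact csInf_le ⟨0, forall_mem_image.2 fun w hw => hM.2.1 w hw.1⟩
    (mem_image_of_mem _ ⟨hw, hnonneg⟩)

lemma nonempty_image_nonneg (hA4 : CondA4 X Ξ γ gs) (hy : y ∈ asymCone X γ \ {0}) :
    (lam '' {w ∈ Ξ | 0 ≤ gs y w}).Nonempty := by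
  obtain ⟨w, hw, hpos⟩ := hA4 y hy
  exact ⟨_, mem_image_of_mem lam ⟨hw, hpos.le⟩⟩

/- Since `gs y 0 < 0`, the asymptotic violation set stays away from the origin. -/
lemma limitRate_pos (hP : Assumption1 P Ξ Q q lam α) (hA1 : CondA1 X Ξ g γ ρ gs)
    (hA3 : CondA3 X γ gs) (hA4 : CondA4 X Ξ γ gs) (hy : y ∈ asymCone X γ \ {0}) :
    0 < limitRate Ξ lam gs y := by
  obtain ⟨-, hne, hcl, hcone, -, -, -, hα, hq, hM, hlam⟩ := hP
  obtain ⟨c, hc, hlow⟩ := hM.exists_mul_rpow_norm_le hq hα hcl hcone hlam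
  obtain ⟨r, hr, hneg⟩ := Metric.mem_nhdsWithin_iff.1 <|
    (hA1.continuousOn_limit_right hy.1 0 (hcone.zero_mem hcl hne)).eventually_lt_const (hA3 y hy)
  have hfar {w : Rn m} (hw : w ∈ Ξ) (hnonneg : 0 ≤ gs y w) : r ≤ ‖w‖ := by
    by_contra! hlt
    exact hnonneg.not_gt (hneg ⟨mem_ball_zero_iff.2 hlt, hw⟩)
  have hpos : 0 < c * r ^ α := by positivity
  refine hpos.trans_le (le_csInf (nonempty_image_nonneg hA4 hy) (forall_mem_image.2 fun w hw => ?_))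
  calc c * r ^ α ≤ c * ‖w‖ ^ α := by gcongr; exact hfar hw.1 hw.2
    _ ≤ lam w := hlow w hw.1

/- A point of the violation set almost attaining the rate is pushed outwards slightly. -/
lemma exists_pos_of_limitRate_lt (hP : Assumption1 P Ξ Q q lam α) (hreg : GRegular X Ξ g)
    (hγ : γ ≠ 0) (hA1 : CondA1 X Ξ g γ ρ gs) (hA3 : CondA3 X γ gs) (hA4 : CondA4 X Ξ γ gs)
    (hy : y ∈ asymCone X γ \ {0}) (hΛ : limitRate Ξ lam gs y < Λ) :
    ∃ w ∈ Ξ, 0 < gs y w ∧ lam w < Λ := by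
  obtain ⟨-, -, -, hcone, -, -, -, -, hq, hM, -⟩ := hP
  obtain ⟨_, ⟨w, hw, rfl⟩, hlt⟩ := exists_lt_of_csInf_lt (nonempty_image_nonneg hA4 hy) hΛ
  have hlim : Tendsto (fun t : ℝ => t ^ α * lam w) (𝓝[>] 1) (𝓝 (lam w)) := by
    simpa only [Real.one_rpow, one_mul] using
      ((Real.continuousAt_rpow_const 1 α (Or.inl one_ne_zero)).tendsto.mono_left
        nhdsWithin_le_nhds).mul_const (lam w)
  obtain ⟨t, htΛ, ht⟩ := ((hlim.eventually_lt_const hlt).and self_mem_nhdsWithin).exists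
  have ht0 : 0 < t := one_pos.trans ht
  refine ⟨t • w, hcone t ht0 w hw.1, hA1.limit_smul_pos hreg hγ hA3 hy hw.1 hw.2 ht, ?_⟩
  rwa [hM.limit_smul hq hcone hw.1 ht0]

end LargeDeviations

section Feasibility

lemma eventually_forall_exp_le_rpow {κ C S c τ : ℝ} (hκ : 0 < κ) (hC : 0 < C) (hS : 0 < S)
    (hτ : 0 ≤ τ) (hc : c < τ) :
    ∀ᶠ e in 𝓝[>] (0 : ℝ), ∀ t : ℝ, κ * Real.exp (-t) ≤ e ^ (1 / S) →
      C * Real.exp (-(τ * (S * t))) ≤ e ^ c := by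
  have hlog := Real.tendsto_log_nhdsGT_zero.eventually_le_atBot
    (-((Real.log C - τ * (S * Real.log κ)) / (τ - c)))
  filter_upwards [hlog, self_mem_nhdsWithin] with e hle he t ht
  rw [le_neg, div_le_iff₀ (sub_pos.2 hc)] at hle
  have hlow : S * Real.log κ - S * t ≤ Real.log e := by
    have := Real.log_le_log (by positivity) ht
    rw [Real.log_mul hκ.ne' (Real.exp_ne_zero _), Real.log_exp, Real.log_rpow he,
      one_div_mul_eq_div, le_div_iff₀ hS] at this
    linarith
  rw [← Real.log_le_log_iff (by positivity) (Real.rpow_pos_of_pos he c),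
    Real.log_mul hC.ne' (Real.exp_ne_zero _), Real.log_exp, Real.log_rpow he]
  linarith [mul_le_mul_of_nonneg_left hlow hτ]

lemma exists_mem_Ioo_lt_pow {c : ℝ} (hc : c < 1) (k : ℕ) : ∃ θ ∈ Ioo (0 : ℝ) 1, c < θ ^ k := by
  have hlim : Tendsto (fun θ : ℝ => θ ^ k) (𝓝[<] 1) (𝓝 1) := by
    simpa only [one_pow] using
      ((continuous_pow k).tendsto (1 : ℝ)).mono_left nhdsWithin_le_nhds
  have hunit : ∀ᶠ θ in 𝓝[<] (1 : ℝ), θ ∈ Ioo (0 : ℝ) 1 := Ioo_mem_nhdsLT one_pos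
  exact (hunit.and (hlim.eventually_const_lt hc)).exists

lemma tendsto_ofReal_rpow_nhdsGT_zero {b : ℝ} (hb : 0 < b) :
    Tendsto (fun e : ℝ => ENNReal.ofReal (e ^ b)) (𝓝[>] 0) (𝓝 0) := by
  have hcont : Continuous fun e : ℝ => ENNReal.ofReal (e ^ b) :=
    ENNReal.continuous_ofReal.comp (Real.continuous_rpow_const hb.le)
  simpa only [Real.zero_rpow hb.ne', ENNReal.ofReal_zero] using
    (hcont.tendsto 0).mono_left nhdsWithin_le_nhds

lemma le_log_div_log_of_le_ofReal_rpow {V : ENNReal} {e c : ℝ} (he : e ∈ Ioo (0 : ℝ) 1)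
    (hV : V ≤ ENNReal.ofReal (e ^ c)) : (c : EReal) ≤ ENNReal.log V / (Real.log e : ℝ) := by
  have hlog : Real.log e < 0 := Real.log_neg he.1 he.2
  have hVtop : V ≠ ⊤ := ne_top_of_le_ne_top ENNReal.ofReal_ne_top hV
  rcases eq_or_ne V 0 with rfl | hV0
  · rw [ENNReal.log_zero,
      EReal.bot_div_of_neg_ne_bot (EReal.coe_neg'.2 hlog) (EReal.coe_ne_bot _)]
    exact le_top
  · rw [ENNReal.log_pos_real hV0 hVtop, ← EReal.coe_div, EReal.coe_le_coe_iff,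
      le_div_iff_of_neg hlog, ← Real.log_rpow he.1]
    exact Real.log_le_log (ENNReal.toReal_pos hV0 hVtop)
      (ENNReal.toReal_le_of_le_ofReal (Real.rpow_nonneg he.1.le c) hV)

variable {n m : ℕ} {P : Measure (Rn m)} {Ξ : Set (Rn m)} {Q : Rn m → ℝ} {q : ℝ → ℝ}
  {lam : Rn m → ℝ} {α : ℝ} {X : Set (Rn n)} {g : Rn n → Rn m → ℝ} {γ ρ : ℝ}
  {gs : Rn n → Rn m → ℝ} {ι : Type*} {l : Filter ι} {u ε : ι → ℝ} {v : ι → Rn n} {y : Rn n}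
  {s c : ℝ}

/- With `I` the rate in direction `y` and `θ` close to `1`, the bounds
`exp (-(I / θ) * q u) ≲ V(v) ≤ ε ^ (1 / s ^ α)` and `V(s ^ γ • v) ≲ exp (-θ * (θ * I * q (u * s)))`
combine through `q (u * s) ≥ θ * s ^ α * q u`, losing the factor `θ ^ 4` in the exponent. -/
lemma eventually_violation_rpow_smul_le_of_scalesTo [l.NeBot] (hP : Assumption1 P Ξ Q q lam α)
    (hreg : GRegular X Ξ g) (hγ : γ ≠ 0) (hA1 : CondA1 X Ξ g γ ρ gs) (hA3 : CondA3 X γ gs)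
    (hA4 : CondA4 X Ξ γ gs) (hs : 0 < s) (hc : c < 1) (hε : Tendsto ε l (𝓝[>] 0))
    (hv : ScalesTo X γ u v l y) (hy : y ≠ 0) (hsv : ∀ᶠ i in l, s ^ γ • v i ∈ X)
    (hfeas : ∀ᶠ i in l, violation P g (v i) ≤ ENNReal.ofReal (ε i ^ (1 / s ^ α))) :
    ∀ᶠ i in l, violation P g (s ^ γ • v i) ≤ ENNReal.ofReal (ε i ^ c) := by
  obtain ⟨-, -, -, -, -, -, -, -, hq, -⟩ := id hP
  have hy' : y ∈ asymCone X γ \ {0} := ⟨hv.mem_asymCone, hy⟩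
  obtain ⟨θ, hθ, hcθ⟩ := exists_mem_Ioo_lt_pow hc 4
  set I := limitRate Ξ lam gs y
  have hI : 0 < I := limitRate_pos hP hA1 hA3 hA4 hy'
  have hS : 0 < s ^ α := Real.rpow_pos_of_pos hs α
  obtain ⟨w, hw, hpos, hlw⟩ := exists_pos_of_limitRate_lt hP hreg hγ hA1 hA3 hA4 hy'
    ((lt_div_iff₀ hθ.1).2 (mul_lt_of_lt_one_right hI hθ.2))
  obtain ⟨κ, hκ, hlower⟩ := exists_eventually_le_violation hP hreg hγ hA1 hv hw hpos hlw
  obtain ⟨C, hC, hupper⟩ := exists_eventually_violation_le hP hreg hγ hA1 (hv.mul_const hs hsv)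
    (J := θ * I) (fun w hw hnn => (mul_lt_of_lt_one_left hI hθ.2).trans_le (limitRate_le hP hw hnn))
    ⟨hθ.1.le, hθ.2⟩
  filter_upwards [hfeas, hlower, hupper, hv.atTop.eventually_gt_atTop 0,
    ((hq.2 s hs).comp hv.atTop).eventually_const_lt (mul_lt_of_lt_one_left hS hθ.2),
    hε.eventually (eventually_forall_exp_le_rpow hκ hC hS (pow_nonneg hθ.1.le 4) hcθ),
    hε.eventually self_mem_nhdsWithin] with i hfeas hlow hup hu hratio hexp hε0
  rw [Function.comp_apply, lt_div_iff₀ (hq.1 _ hu)] at hratio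
  have hle : κ * Real.exp (-(I / θ * q (u i))) ≤ ε i ^ (1 / s ^ α) :=
    (ENNReal.ofReal_le_ofReal_iff (Real.rpow_nonneg hε0.le _)).1 (hlow.trans hfeas)
  have hrate : θ ^ 4 * (s ^ α * (I / θ * q (u i))) ≤ θ * (θ * I * q (u i * s)) := by
    have hθ0 := hθ.1
    calc θ ^ 4 * (s ^ α * (I / θ * q (u i))) = θ * (θ * I * (θ * s ^ α * q (u i))) := by
          field_simp
      _ ≤ θ * (θ * I * q (u i * s)) := by gcongr
  exact hup.trans <| ENNReal.ofReal_le_ofReal <|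
    (mul_le_mul_of_nonneg_left (Real.exp_le_exp.2 (neg_le_neg hrate)) hC.le).trans (hexp _ hle)

lemma exists_scalesTo_ultrafilter {U : Ultrafilter ι} (hγ : γ ≠ 0) (hv : ∀ᶠ i in U, v i ∈ X)
    (hu : Tendsto (fun i => ‖v i‖ ^ γ⁻¹) U atTop) :
    ∃ y ≠ 0, ScalesTo X γ (fun i => ‖v i‖ ^ γ⁻¹) v U y := by
  have hsphere : ∀ᶠ i in U, ((‖v i‖ ^ γ⁻¹) ^ γ)⁻¹ • v i ∈ Metric.sphere (0 : Rn n) 1 := by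
    filter_upwards [hu.eventually_gt_atTop 0] with i hi
    have hvi : v i ≠ 0 := fun h0 => by
      rw [h0, norm_zero, Real.zero_rpow (inv_ne_zero hγ)] at hi
      exact hi.false
    rw [Real.rpow_inv_rpow (norm_nonneg _) hγ]
    exact mem_sphere_zero_iff_norm.2 (norm_smul_inv_norm hvi)
  obtain ⟨y, hy, hlim⟩ := (isCompact_sphere (0 : Rn n) 1).ultrafilter_le_nhds' (U.map _) hsphere
  exact ⟨y, ne_zero_of_mem_unit_sphere ⟨y, hy⟩, hu, hv, hlim⟩

/- It suffices to argue along ultrafilters, where `v / ‖v‖` converges by compactness. -/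
lemma eventually_violation_rpow_smul_le (hP : Assumption1 P Ξ Q q lam α) (hreg : GRegular X Ξ g)
    (hγ : γ ≠ 0) (hA1 : CondA1 X Ξ g γ ρ gs) (hA2 : CondA2 X γ) (hA3 : CondA3 X γ gs)
    (hA4 : CondA4 X Ξ γ gs) (hA5 : CondA5 Ξ g γ) (hs : 0 < s) (hc : c < 1)
    (hε : Tendsto ε l (𝓝[>] 0)) (hv : ∀ᶠ i in l, v i ∈ X) (hsv : ∀ᶠ i in l, s ^ γ • v i ∈ X)
    (hfeas : ∀ᶠ i in l, violation P g (v i) ≤ ENNReal.ofReal (ε i ^ (1 / s ^ α))) :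
    ∀ᶠ i in l, violation P g (s ^ γ • v i) ≤ ENNReal.ofReal (ε i ^ c) := by
  refine mem_iff_ultrafilter.2 fun U hU => ?_
  have hviol : Tendsto (fun i => violation P g (v i)) l (𝓝 0) :=
    tendsto_of_tendsto_of_tendsto_of_le_of_le' tendsto_const_nhds
      ((tendsto_ofReal_rpow_nhdsGT_zero (by positivity)).comp hε)
      (.of_forall fun _ => zero_le) hfeas
  by_cases hzero : γ < 0 ∧ ∀ᶠ i in U, v i = 0
  · filter_upwards [hzero.2] with i hi
    rw [hi, smul_zero, violation_zero hP (hA5 hzero.1)]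
    exact zero_le
  · have hu := tendsto_norm_rpow_of_tendsto_violation hP hreg hγ hA1 hA2 hA3 hA4 hA5
      (hv.filter_mono hU) (fun hneg => Ultrafilter.eventually_not.2 fun h0 => hzero ⟨hneg, h0⟩)
      (hviol.mono_left hU)
    obtain ⟨y, hy, hscale⟩ := exists_scalesTo_ultrafilter hγ (hv.filter_mono hU) hu
    exact eventually_violation_rpow_smul_le_of_scalesTo hP hreg hγ hA1 hA3 hA4 hs hc
      (hε.mono_left hU) hscale hy (hsv.filter_mono hU) (hfeas.filter_mono hU)

theorem asymptotic_feasibility_general {x : ι → Rn n} (hP : Assumption1 P Ξ Q q lam α)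
    (hreg : GRegular X Ξ g) (hγ : γ ≠ 0) (hA1 : CondA1 X Ξ g γ ρ gs) (hA2 : CondA2 X γ)
    (hA3 : CondA3 X γ gs) (hA4 : CondA4 X Ξ γ gs) (hA5 : CondA5 Ξ g γ) (hs : 0 < s)
    (hε : Tendsto ε l (𝓝[>] 0)) (hx : ∀ᶠ i in l, x i ∈ X) (hsx : ∀ᶠ i in l, s ^ (-γ) • x i ∈ X)
    (hfeas : ∀ᶠ i in l,
      violation P g (s ^ (-γ) • x i) ≤ ENNReal.ofReal (ε i ^ (1 / s ^ α))) :
    (1 : EReal) ≤ liminf (fun i => ENNReal.log (violation P g (x i)) / (Real.log (ε i) : ℝ)) l := by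
  refine le_of_forall_lt fun a ha => ?_
  obtain ⟨c, hac, hc⟩ := EReal.lt_iff_exists_real_btwn.1 ha
  have hcancel (i : ι) : s ^ γ • s ^ (-γ) • x i = x i := by
    rw [smul_smul, ← Real.rpow_add hs, add_neg_cancel, Real.rpow_zero, one_smul]
  have hviol := eventually_violation_rpow_smul_le hP hreg hγ hA1 hA2 hA3 hA4 hA5 hs
    (by exact_mod_cast hc) hε hsx (by simpa only [hcancel] using hx) hfeas
  refine hac.trans_le (le_liminf_of_le (by isBoundedDefault) ?_)
  filter_upwards [hviol, hε.eventually (Ioo_mem_nhdsGT one_pos)] with i hi hεi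
  exact le_log_div_log_of_le_ofReal_rpow hεi (hcancel i ▸ hi)

end Feasibility

/-- Deterministic core of the main theorem: if `(x_ε)` are points of `X` whose
`s^{-γ}`-scalings lie in `X` and satisfy the scenario feasibility guarantee
`P(g(s^{-γ} x_ε, ·) > 0) ≤ ε^{1/s^α}` for small `ε`, then the violation
probability `V(x_ε) = P(g(x_ε, ·) > 0)` satisfies
`liminf_{ε→0⁺} log V(x_ε) / log ε ≥ 1` (in `EReal`, with `log 0 = ⊥`, so the
ratio is `⊤` whenever `V(x_ε) = 0`). -/
theorem asymptotic_feasibility {n m : ℕ} (P : Measure (Rn m)) (Ξ : Set (Rn m))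
    (Q : Rn m → ℝ) (q : ℝ → ℝ) (lam : Rn m → ℝ) (α : ℝ)
    (hA1 : Assumption1 P Ξ Q q lam α)
    (X : Set (Rn n)) (g : Rn n → Rn m → ℝ) (γ ρ : ℝ) (gs : Rn n → Rn m → ℝ)
    (hA2 : Assumption2 X Ξ g γ ρ gs)
    (s : ℝ) (hs : 1 ≤ s)
    (x : ℝ → Rn n)
    (hxX : ∀ ε ∈ Set.Ioo (0 : ℝ) 1, x ε ∈ X)
    (hxsX : ∀ ε ∈ Set.Ioo (0 : ℝ) 1, (s ^ (-γ)) • x ε ∈ X)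
    (hfeas : ∃ ε₀ ∈ Set.Ioo (0 : ℝ) 1, ∀ ε ∈ Set.Ioo (0 : ℝ) ε₀,
      P {z : Rn m | 0 < g ((s ^ (-γ)) • x ε) z} ≤ ENNReal.ofReal (ε ^ (1 / s ^ α))) :
    (1 : EReal) ≤
      Filter.liminf
        (fun ε : ℝ =>
          ENNReal.log (P {z : Rn m | 0 < g (x ε) z}) / ((Real.log ε : ℝ) : EReal))
        (𝓝[>] (0 : ℝ)) := by
  obtain ⟨hreg, hγ, -, hCondA1, hCondA2, hCondA3, hCondA4, hCondA5⟩ := hA2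
  obtain ⟨ε₀, hε₀, hfeas⟩ := hfeas
  have hunit : ∀ᶠ ε in 𝓝[>] (0 : ℝ), ε ∈ Ioo (0 : ℝ) 1 := Ioo_mem_nhdsGT one_pos
  exact asymptotic_feasibility_general hA1 hreg hγ hCondA1 hCondA2 hCondA3 hCondA4 hCondA5
    (one_pos.trans_le hs) tendsto_id (hunit.mono hxX) (hunit.mono hxsX)
    (mem_of_superset (Ioo_mem_nhdsGT hε₀.1) hfeas)
end
end

section
/- Let X ⊆ ℝ^n be a nonempty closed convex set and Ξ ⊆ ℝ^m a nonempty closed cone, and fix γ ≠ 0. Suppose h : X × Ξ → (0,∞) satisfies condition (A1) with exponents (γ, ρ_h) for some ρ_h ≥ 0 and a continuous limit function h* : X^∞_γ × Ξ → ℝ satisfying h*(y, w) > 0 for all (y, w) ∈ X^∞_γ × Ξ. Suppose f : X × Ξ → ℝ satisfies conditions (A1)–(A5) of Assumption 2 with exponents (γ, ρ) for some ρ ≥ 0 and limit function f*. Then the product g(x, z) := h(x, z) f(x, z) satisfies conditions (A1)–(A5) with exponents (γ, ρ + ρ_h) and limit function g*(y, w) := h*(y, w) f*(y, w); in particular g*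 is continuous on X^∞_γ × Ξ, g(x_u, z_u)/u^{ρ+ρ_h} → g*(y, w) along all admissible families, g*(y, 0) < 0 for all y ∈ X^∞_γ \ {0}, for every y ∈ X^∞_γ \ {0} there exists w ∈ Ξ with g*(y, w) > 0, and if γ < 0 then g(0, z) ≤ 0 for all z ∈ Ξ. -/
open Filter Topology MeasureTheory Set

noncomputable section

/-!
Multiplying by a positive factor preserves signs, and limits multiply because
`u ^ (ρ + ρh) = u ^ ρ * u ^ ρh`. The positivity of `hs` and `h` can only be used at points of their
domains, so (A3) requires `0 ∈ Ξ` and (A5) requires `0 ∈ X`. The former holds since a closed cone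
contains the limit of `c • z` as `c → 0⁺`. The latter holds for `γ < 0` since then `lamk k ^ γ → 0`,
so convergence of `(lamk k ^ γ)⁻¹ • a k` forces `a k → 0`.
-/

theorem IsPosCone.zero_mem_closure {d : ℕ} {Z : Set (Rn d)} (hZ : IsPosCone Z)
    (hne : Z.Nonempty) : 0 ∈ closure Z := by
  obtain ⟨z, hz⟩ := hne
  have smul_tendsto_zero : Tendsto (fun c : ℝ => c • z) (𝓝[>] 0) (𝓝 0) :=
    ((continuous_id.smul continuous_const).tendsto' 0 0 (zero_smul ℝ z)).mono_left
      nhdsWithin_le_nhds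
  refine mem_closure_of_tendsto smul_tendsto_zero ?_
  filter_upwards [self_mem_nhdsWithin] with c hc using hZ c hc z hz

theorem zero_mem_closure_of_asymCone_nonempty {d : ℕ} {A : Set (Rn d)} {θ : ℝ} (hθ : θ < 0)
    (hne : (asymCone A θ).Nonempty) : 0 ∈ closure A := by
  obtain ⟨y, a, lamk, a_mem, lamk_pos, lamk_atTop, rescaled_tendsto⟩ := hne
  have rpow_tendsto_zero : Tendsto (fun k => lamk k ^ θ) atTop (𝓝 0) := by
    simpa only [neg_neg, Function.comp_def] using
      (tendsto_rpow_neg_atTop (neg_pos.mpr hθ)).comp lamk_atTop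
  have a_tendsto_zero : Tendsto a atTop (𝓝 0) := by
    have smul_rescaled (k : ℕ) : lamk k ^ θ • (lamk k ^ θ)⁻¹ • a k = a k :=
      smul_inv_smul₀ (Real.rpow_pos_of_pos (lamk_pos k) θ).ne' (a k)
    simpa only [smul_rescaled, zero_smul] using rpow_tendsto_zero.smul rescaled_tendsto
  exact mem_closure_of_tendsto a_tendsto_zero (Eventually.of_forall a_mem)

section Product

variable {n m : ℕ} {X : Set (Rn n)} {Ξ : Set (Rn m)} {γ ρ ρh : ℝ} {h f hs fs : Rn n → Rn m → ℝ}

theorem CondA1.mul (hh : CondA1 X Ξ h γ ρh hs) (hf : CondA1 X Ξ f γ ρ fs) :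
    CondA1 X Ξ (fun x z => h x z * f x z) γ (ρh + ρ) (fun y w => hs y w * fs y w) := by
  refine ⟨hh.1.mul hf.1, fun y hy w hw xu zu hxu hzu hxy hzw => ?_⟩
  have h_tendsto := hh.2 y hy w hw xu zu hxu hzu hxy hzw
  have f_tendsto := hf.2 y hy w hw xu zu hxu hzu hxy hzw
  refine (h_tendsto.mul f_tendsto).congr' ?_
  filter_upwards [eventually_gt_atTop 0] with u hu
  rw [Real.rpow_add hu, div_mul_div_comm]

theorem CondA3.pos_mul (hf : CondA3 X γ fs) (hs_pos : ∀ y ∈ asymCone X γ \ {0}, 0 < hs y 0) :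
    CondA3 X γ (fun y w => hs y w * fs y w) :=
  fun y hy => mul_neg_of_pos_of_neg (hs_pos y hy) (hf y hy)

theorem CondA4.pos_mul (hf : CondA4 X Ξ γ fs)
    (hs_pos : ∀ y ∈ asymCone X γ \ {0}, ∀ w ∈ Ξ, 0 < hs y w) :
    CondA4 X Ξ γ (fun y w => hs y w * fs y w) := by
  intro y hy
  obtain ⟨w, hw, fs_pos⟩ := hf y hy
  exact ⟨w, hw, mul_pos (hs_pos y hy w hw) fs_pos⟩

theorem CondA5.nonneg_mul (hf : CondA5 Ξ f γ) (h_nonneg : γ < 0 → ∀ z ∈ Ξ, 0 ≤ h 0 z) :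
    CondA5 Ξ (fun x z => h x z * f x z) γ :=
  fun hγ z hz => mul_nonpos_of_nonneg_of_nonpos (h_nonneg hγ z hz) (hf hγ z hz)

theorem product_invariance_general (hX : IsClosed X) (hΞ : 0 ∈ Ξ)
    (h_nonneg : ∀ x ∈ X, ∀ z ∈ Ξ, 0 ≤ h x z) (hhA1 : CondA1 X Ξ h γ ρh hs)
    (hs_pos : ∀ y ∈ asymCone X γ \ {0}, ∀ w ∈ Ξ, 0 < hs y w)
    (hfA1 : CondA1 X Ξ f γ ρ fs) (hfA2 : CondA2 X γ) (hfA3 : CondA3 X γ fs)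
    (hfA4 : CondA4 X Ξ γ fs) (hfA5 : CondA5 Ξ f γ) :
    CondA1 X Ξ (fun x z => h x z * f x z) γ (ρ + ρh) (fun y w => hs y w * fs y w) ∧
      CondA2 X γ ∧
      CondA3 X γ (fun y w => hs y w * fs y w) ∧
      CondA4 X Ξ γ (fun y w => hs y w * fs y w) ∧
      CondA5 Ξ (fun x z => h x z * f x z) γ := by
  have zero_mem_X (hγ : γ < 0) : 0 ∈ X :=
    hX.closure_subset (zero_mem_closure_of_asymCone_nonempty hγ (hfA2.mono sdiff_subset))
  exact ⟨add_comm ρh ρ ▸ hhA1.mul hfA1, hfA2,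
    hfA3.pos_mul fun y hy => hs_pos y hy 0 hΞ,
    hfA4.pos_mul hs_pos,
    hfA5.nonneg_mul fun hγ => h_nonneg 0 (zero_mem_X hγ)⟩

end Product

/-- Invariance to multiplication by a strictly positive function: if `h` satisfies
(A1) with exponents `(γ, ρh)` and strictly positive limit `hs`, and `f` satisfies
(A1)–(A5) with exponents `(γ, ρ)` and limit `fs`, then `g = h·f` satisfies
(A1)–(A5) with exponents `(γ, ρ + ρh)` and limit `hs·fs`. -/
theorem product_invariance {n m : ℕ} (X : Set (Rn n)) (Ξ : Set (Rn m))
    (hXne : X.Nonempty) (hXcl : IsClosed X) (hXcv : Convex ℝ X)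
    (hΞne : Ξ.Nonempty) (hΞcl : IsClosed Ξ) (hΞcone : IsPosCone Ξ)
    (γ : ℝ) (hγ : γ ≠ 0)
    (h f : Rn n → Rn m → ℝ) (ρh ρ : ℝ) (hρh : 0 ≤ ρh) (hρ : 0 ≤ ρ)
    (hs fs : Rn n → Rn m → ℝ)
    (hpos : ∀ x ∈ X, ∀ z ∈ Ξ, 0 < h x z)
    (hhA1 : CondA1 X Ξ h γ ρh hs)
    (hspos : ∀ y ∈ asymCone X γ, ∀ w ∈ Ξ, 0 < hs y w)
    (hfA1 : CondA1 X Ξ f γ ρ fs) (hfA2 : CondA2 X γ) (hfA3 : CondA3 X γ fs)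
    (hfA4 : CondA4 X Ξ γ fs) (hfA5 : CondA5 Ξ f γ) :
    CondA1 X Ξ (fun x z => h x z * f x z) γ (ρ + ρh)
        (fun y w => hs y w * fs y w) ∧
      CondA2 X γ ∧
      CondA3 X γ (fun y w => hs y w * fs y w) ∧
      CondA4 X Ξ γ (fun y w => hs y w * fs y w) ∧
      CondA5 Ξ (fun x z => h x z * f x z) γ :=
  product_invariance_general hXcl (hΞcl.closure_subset (hΞcone.zero_mem_closure hΞne))
    (fun x hx z hz => (hpos x hx z hz).le) hhA1 (fun y hy => hspos y hy.1)
    hfA1 hfA2 hfA3 hfA4 hfA5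
end
end

section
/- Let X ⊆ ℝ^n be a nonempty closed convex set and Ξ ⊆ ℝ^m a nonempty closed cone, fix γ ≠ 0 and ρ ≥ 0, and let K ≥ 1 be an integer. Suppose each function g_i : X × Ξ → ℝ, i = 1, …, K, satisfies conditions (A1)–(A5) of Assumption 2 with the same exponents (γ, ρ) and respective continuous limit functions g_i* : X^∞_γ × Ξ → ℝ. Then g(x, z) := max_{i=1,…,K} g_i(x, z) satisfies conditions (A1)–(A5) with exponents (γ, ρ) and limit function g*(y, w) := max_{i=1,…,K} g_i*(y, w). -/
open Filter Topology MeasureTheory Set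

noncomputable section

theorem tendsto_ciSup_of_finite {ι α L : Type*} [Finite ι] [Nonempty ι]
    [ConditionallyCompleteLattice L] [TopologicalSpace L] [ContinuousSup L]
    {l : Filter α} {f : ι → α → L} {a : ι → L} (h : ∀ i, Tendsto (f i) l (𝓝 (a i))) :
    Tendsto (fun x => ⨆ i, f i x) l (𝓝 (⨆ i, a i)) := by
  have := Fintype.ofFinite ι
  simpa only [Finset.sup'_univ_eq_ciSup] using
    Tendsto.finset_sup'_nhds_apply Finset.univ_nonempty fun i _ => h i

theorem ciSup_lt_of_finite {ι L : Type*} [Finite ι] [Nonempty ι]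
    [ConditionallyCompleteLinearOrder L] {f : ι → L} {a : L} (h : ∀ i, f i < a) :
    ⨆ i, f i < a := by
  obtain ⟨i, hi⟩ := exists_eq_ciSup_of_finite (f := f)
  exact hi ▸ h i

theorem real_iSup_div_of_nonneg {ι : Sort*} {r : ℝ} (hr : 0 ≤ r) (f : ι → ℝ) :
    (⨆ i, f i) / r = ⨆ i, f i / r := by
  simpa only [div_eq_mul_inv] using Real.iSup_mul_of_nonneg (inv_nonneg.2 hr) f

section Maximum

variable {ι : Type*} {n m : ℕ} {X : Set (Rn n)} {Ξ : Set (Rn m)} {γ ρ : ℝ}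
  {g gs : ι → Rn n → Rn m → ℝ}

theorem CondA1.iSup [Finite ι] [Nonempty ι] (h : ∀ i, CondA1 X Ξ (g i) γ ρ (gs i)) :
    CondA1 X Ξ (fun x z => ⨆ i, g i x z) γ ρ (fun y w => ⨆ i, gs i y w) := by
  refine ⟨fun p hp => tendsto_ciSup_of_finite fun i => (h i).1 p hp, ?_⟩
  intro y hy w hw xu zu hxu hzu hxy hzw
  have tendsto_max_quotients :
      Tendsto (fun u => ⨆ i, g i (xu u) (zu u) / u ^ ρ) atTop (𝓝 (⨆ i, gs i y w)) :=
    tendsto_ciSup_of_finite fun i => (h i).2 y hy w hw xu zu hxu hzu hxy hzw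
  refine tendsto_max_quotients.congr' ?_
  filter_upwards [eventually_ge_atTop 0] with u hu
  exact (real_iSup_div_of_nonneg (Real.rpow_nonneg hu ρ) _).symm

theorem CondA3.iSup [Finite ι] [Nonempty ι] (h : ∀ i, CondA3 X γ (gs i)) :
    CondA3 X γ (fun y w => ⨆ i, gs i y w) :=
  fun y hy => ciSup_lt_of_finite fun i => h i y hy

theorem CondA4.mono {F G : Rn n → Rn m → ℝ} (h : CondA4 X Ξ γ F)
    (hFG : ∀ y ∈ asymCone X γ \ {0}, ∀ w ∈ Ξ, F y w ≤ G y w) : CondA4 X Ξ γ G := by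
  intro y hy
  obtain ⟨w, hw, hpos⟩ := h y hy
  exact ⟨w, hw, hpos.trans_le (hFG y hy w hw)⟩

theorem CondA4.iSup [Finite ι] {i : ι} (h : CondA4 X Ξ γ (gs i)) :
    CondA4 X Ξ γ (fun y w => ⨆ j, gs j y w) :=
  h.mono fun y _ w _ => Finite.le_ciSup (fun j => gs j y w) i

theorem CondA5.iSup (h : ∀ i, CondA5 Ξ (g i) γ) : CondA5 Ξ (fun x z => ⨆ i, g i x z) γ :=
  fun hγ z hz => Real.iSup_nonpos fun i => h i hγ z hz

theorem max_satisfies_assumption_general [Finite ι]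
    (hA1 : ∀ i, CondA1 X Ξ (g i) γ ρ (gs i)) (hA2 : CondA2 X γ)
    (hA3 : ∀ i, CondA3 X γ (gs i)) (hA4 : ∃ i, CondA4 X Ξ γ (gs i))
    (hA5 : ∀ i, CondA5 Ξ (g i) γ) :
    CondA1 X Ξ (fun x z => ⨆ i, g i x z) γ ρ (fun y w => ⨆ i, gs i y w) ∧
      CondA2 X γ ∧
      CondA3 X γ (fun y w => ⨆ i, gs i y w) ∧
      CondA4 X Ξ γ (fun y w => ⨆ i, gs i y w) ∧
      CondA5 Ξ (fun x z => ⨆ i, g i x z) γ := by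
  obtain ⟨i, hA4i⟩ := hA4
  have : Nonempty ι := ⟨i⟩
  exact ⟨.iSup hA1, hA2, .iSup hA3, .iSup hA4i, .iSup hA5⟩

end Maximum

/-- Joint chance constraints: if each `g i` satisfies (A1)–(A5) with the same
exponents `(γ, ρ)` and limit `gs i`, then the pointwise maximum
`(x, z) ↦ max_i g i x z` satisfies (A1)–(A5) with exponents `(γ, ρ)` and limit
`(y, w) ↦ max_i gs i y w`. -/
theorem max_satisfies_assumption {n m K : ℕ} (hK : 1 ≤ K)
    (X : Set (Rn n)) (Ξ : Set (Rn m))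
    (hXne : X.Nonempty) (hXcl : IsClosed X) (hXcv : Convex ℝ X)
    (hΞne : Ξ.Nonempty) (hΞcl : IsClosed Ξ) (hΞcone : IsPosCone Ξ)
    (γ ρ : ℝ) (hγ : γ ≠ 0) (hρ : 0 ≤ ρ)
    (g : Fin K → Rn n → Rn m → ℝ) (gs : Fin K → Rn n → Rn m → ℝ)
    (hA1 : ∀ i, CondA1 X Ξ (g i) γ ρ (gs i)) (hA2 : CondA2 X γ)
    (hA3 : ∀ i, CondA3 X γ (gs i)) (hA4 : ∀ i, CondA4 X Ξ γ (gs i))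
    (hA5 : ∀ i, CondA5 Ξ (g i) γ) :
    CondA1 X Ξ (fun x z => ⨆ i, g i x z) γ ρ (fun y w => ⨆ i, gs i y w) ∧
      CondA2 X γ ∧
      CondA3 X γ (fun y w => ⨆ i, gs i y w) ∧
      CondA4 X Ξ γ (fun y w => ⨆ i, gs i y w) ∧
      CondA5 Ξ (fun x z => ⨆ i, g i x z) γ :=
  max_satisfies_assumption_general hA1 hA2 hA3 ⟨⟨0, hK⟩, hA4 _⟩ hA5
end
end

section
/- Let (f_u)_{u>0} be a family of real-valued functions on ℝ^m converging continuously to f* : ℝ^m → ℝ. Then for every M > 0, every δ > 0, and every a ∈ ℝ, there exists u₀ > 0 such that for all u > u₀: {x ∈ ℝ^m : ‖x‖ ≤ M and f_u(x) > a} ⊆ {x ∈ ℝ^m : f*(x) ≥ a} + {x ∈ ℝ^m : ‖x‖ ≤ δ}, where + denotes the Minkowski sum and ‖·‖ is the Euclidean norm. -/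
open Filter Topology MeasureTheory Set Pointwise

noncomputable section

/-- The family `(f_u)_{u>0}` converges continuously to `fstar`: for every `x`
and every family `x_u → x` (as `u → ∞`), `f_u(x_u) → fstar(x)`. -/
def ContConv {d : ℕ} (f : ℝ → Rn d → ℝ) (fstar : Rn d → ℝ) : Prop :=
  ∀ x : Rn d, ∀ xu : ℝ → Rn d, Tendsto xu atTop (𝓝 x) →
    Tendsto (fun u : ℝ => f u (xu u)) atTop (𝓝 (fstar x))

/-!
Continuous convergence `f_u → f*` at `x` amounts to convergence of `f_u(y)` to `f*(x)` as
`(u, y) → (∞, x)` jointly. Indeed, a sequence `(u_n, y_n)` violating the latter extends, with the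
value `x` off the `u_n`, to a family `x_u → x` violating the former: only finitely many `y_n` lie
outside a given neighbourhood of `x`, and the limit `u → ∞` ignores finitely many `u_n`.
Hence if `f*(x) < a`, then `f_u < a` near `x` for large `u`, while a point with `f*(x) ≥ a` has a
whole neighbourhood inside the enlarged superlevel set. Compactness makes this uniform over the
ball.
-/

theorem exists_extend_apply_eq {α β γ : Type*} (v : α → β) (y : α → γ) (e : β → γ) (n : α) :
    ∃ m, v m = v n ∧ Function.extend v y e (v n) = y m := by
  classical
  have hn : ∃ m, v m = v n := ⟨n, rfl⟩
  exact ⟨hn.choose, hn.choose_spec, by rw [Function.extend_def, dif_pos hn]⟩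

section ContinuousConvergence

variable {ι X Y : Type*} {l : Filter ι}

theorem tendsto_extend_of_le_cofinite {α : Type*} {G : Filter X} (hl : l ≤ cofinite)
    (v : α → ι) {y : α → X} {e : ι → X} (hy : Tendsto y cofinite G) (he : Tendsto e l G) :
    Tendsto (Function.extend v y e) l G := by
  refine tendsto_def.2 fun V hV => ?_
  have hfin : {n | y n ∉ V}.Finite := hy hV
  filter_upwards [hl (hfin.image v).compl_mem_cofinite, he hV] with u hu heu
  by_cases hrange : ∃ n, v n = u
  · obtain ⟨n, rfl⟩ := hrange
    obtain ⟨m, hm, hext⟩ := exists_extend_apply_eq v y e n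
    have hmV : y m ∈ V := by_contra fun hmV => hu ⟨m, hmV, hm⟩
    rwa [mem_preimage, hext]
  · rwa [mem_preimage, Function.extend_apply' _ _ _ hrange]

theorem tendsto_uncurry_of_forall_tendsto [TopologicalSpace X] [FirstCountableTopology X]
    [l.IsCountablyGenerated] (hl : l ≤ cofinite) {f : ι → X → Y} {x : X} {L : Filter Y}
    (hf : ∀ xu : ι → X, Tendsto xu l (𝓝 x) → Tendsto (fun u => f u (xu u)) l L) :
    Tendsto (Function.uncurry f) (l ×ˢ 𝓝 x) L := by
  refine tendsto_def.2 fun W hW => by_contra fun hbad => ?_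
  obtain ⟨p, hp, hpW⟩ := exists_seq_forall_of_frequently (not_eventually.1 hbad)
  obtain ⟨hv, hy⟩ := tendsto_prod_iff'.1 hp
  rw [← Nat.cofinite_eq_atTop] at hy
  let v : ℕ → ι := fun n => (p n).1
  let y : ℕ → X := fun n => (p n).2
  have hextend : Tendsto (Function.extend v y fun _ => x) l (𝓝 x) :=
    tendsto_extend_of_le_cofinite hl v hy tendsto_const_nhds
  obtain ⟨n, hn⟩ := (hv.eventually (hf _ hextend hW)).exists
  obtain ⟨m, hvm, hym⟩ := exists_extend_apply_eq v y (fun _ => x) n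
  have hmW : f (v m) (y m) ∈ W := by
    rw [hvm, ← hym]
    exact hn
  exact hpW m hmW

variable [TopologicalSpace X] [TopologicalSpace Y] [LinearOrder Y] [ClosedIciTopology Y]

theorem eventually_inter_superlevel_subset_of_mem_nhdsSet {f : ι → X → Y} {g : X → Y}
    {K U : Set X} (hf : ∀ x ∈ K, Tendsto (Function.uncurry f) (l ×ˢ 𝓝 x) (𝓝 (g x)))
    (hK : IsCompact K) {a : Y} (hU : U ∈ 𝓝ˢ {x | a ≤ g x}) :
    ∀ᶠ u in l, K ∩ {x | a ≤ f u x} ⊆ U := by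
  have hlocal : ∀ x ∈ K, ∀ᶠ p : ι × X in l ×ˢ 𝓝 x, a ≤ f p.1 p.2 → p.2 ∈ U := by
    intro x hxK
    rcases le_or_gt a (g x) with hx | hx
    · filter_upwards [tendsto_snd.eventually (mem_nhdsSet_iff_forall.1 hU x hx)] with p hp _
      exact hp
    · filter_upwards [(hf x hxK).eventually (eventually_lt_nhds hx)] with p hp hle
      exact absurd hle hp.not_ge
  have huniform : ∀ᶠ p : ι × X in l ×ˢ 𝓝ˢ K, a ≤ f p.1 p.2 → p.2 ∈ U :=
    hK.mem_prod_nhdsSet_of_forall hlocal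
  filter_upwards [huniform.curry] with u hu x hx
  exact hu.self_of_nhdsSet x hx.1 hx.2

end ContinuousConvergence

theorem add_mem_nhdsSet_of_mem_nhds_zero {E : Type*} [TopologicalSpace E] [AddGroup E]
    [ContinuousConstVAdd E E] {V : Set E} (hV : V ∈ 𝓝 0) (s : Set E) : s + V ∈ 𝓝ˢ s :=
  mem_nhdsSet_iff_forall.2 fun x hx =>
    mem_of_superset (singleton_add_mem_nhds_of_nhds_zero x hV)
      (add_subset_add_right (singleton_subset_iff.2 hx))

theorem levelset_containment_i_general {ι E Y : Type*} [TopologicalSpace E] [AddGroup E]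
    [ContinuousConstVAdd E E] [FirstCountableTopology E] [TopologicalSpace Y] [LinearOrder Y]
    [ClosedIciTopology Y] {l : Filter ι} [l.IsCountablyGenerated] (hl : l ≤ cofinite)
    {f : ι → E → Y} {fstar : E → Y} {K V : Set E}
    (hcc : ∀ x ∈ K, ∀ xu : ι → E, Tendsto xu l (𝓝 x) →
      Tendsto (fun u => f u (xu u)) l (𝓝 (fstar x)))
    (hK : IsCompact K) (hV : V ∈ 𝓝 0) (a : Y) :
    ∀ᶠ u in l, K ∩ {x | a ≤ f u x} ⊆ {x | a ≤ fstar x} + V :=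
  eventually_inter_superlevel_subset_of_mem_nhdsSet
    (fun x hx => tendsto_uncurry_of_forall_tendsto hl (hcc x hx)) hK
    (add_mem_nhdsSet_of_mem_nhds_zero hV _)

/-- Lemma 2(i): superlevel sets of continuously convergent functions, restricted to a
ball, are eventually contained in a `δ`-enlargement of the limit's superlevel set. -/
theorem levelset_containment_i {d : ℕ} (f : ℝ → Rn d → ℝ) (fstar : Rn d → ℝ)
    (hcc : ContConv f fstar) (M δ : ℝ) (hM : 0 < M) (hδ : 0 < δ) (a : ℝ) :
    ∃ u₀ : ℝ, 0 < u₀ ∧ ∀ u : ℝ, u₀ < u →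
      {x : Rn d | ‖x‖ ≤ M ∧ a < f u x} ⊆
        {x : Rn d | a ≤ fstar x} + {x : Rn d | ‖x‖ ≤ δ} := by
  have hsubset := levelset_containment_i_general atTop_le_cofinite (fun x _ => hcc x)
    (isCompact_closedBall 0 M) (Metric.closedBall_mem_nhds 0 hδ) a
  obtain ⟨u₀, hu₀, hsub⟩ := (atTop_basis_Ioi' (0 : ℝ)).eventually_iff.1 hsubset
  simp only [Metric.closedBall, dist_zero_right] at hsub
  exact ⟨u₀, hu₀, fun u hu x hx => hsub hu ⟨hx.1, hx.2.le⟩⟩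
end
end

section
/- Suppose Assumption 1 holds for a Borel probability measure P on ℝ^m with support the nonempty closed cone Ξ, negative log-density Q ∈ MRV(Ξ, q, λ), q ∈ RV(α), α > 0, and λ(θ) > 0 for all unit θ ∈ Ξ. Then for every closed set C ⊆ ℝ^m, limsup_{u→∞} log P({z ∈ ℝ^m : z/u ∈ C}) / q(u) ≤ − inf{λ(w) : w ∈ C ∩ Ξ}, with the conventions log 0 = −∞ and inf ∅ = +∞. -/
open Filter Topology MeasureTheory Set

noncomputable section

/-!
For closed `C`, the large deviation bound for `P(u C)` is Laplace's principle for
`∫_{uC ∩ Ξ} e^{-Q}`, once `Q(u w) ≥ M q(u)` is known for large `u`, uniformly in `w ∈ C ∩ Ξ`,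
whenever `M < lam` on `C ∩ Ξ`. On bounded parts this is compactness, since convergence along all
curves is locally uniform convergence. At infinity, `lam` is homogeneous of degree `α`, so
`Q(2z) ≥ 2^β Q(z)` for `β < α` and all large `z ∈ Ξ`; iterating this along dyadic scales yields the
Potter-type bound `Q(u w) ≥ c ‖w‖^β q(u)`, which also makes `e^{-εQ}` integrable for every `ε > 0`.
Writing `e^{-Q} = e^{-(1-ε)Q} e^{-εQ}` then gives `P(u C) ≤ K_ε e^{-(1-ε) M q(u)}`, and `q → ∞`
absorbs the constant `K_ε`.
-/

section ContinuousConvergence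

variable {ι X Y : Type*} [TopologicalSpace X] {x : X}

lemma tendsto_extend_const_cofinite {κ : Type*} {a : κ → ι} {b : κ → X}
    (ha : Function.Injective a) (hb : Tendsto b cofinite (𝓝 x)) :
    Tendsto (Function.extend a b fun _ => x) cofinite (𝓝 x) := by
  intro V hV
  have hfin : {k | b k ∉ V}.Finite := hb hV
  refine (hfin.image a).subset fun i hi => ?_
  by_cases hia : ∃ k, a k = i
  · obtain ⟨k, rfl⟩ := hia
    refine ⟨k, ?_, rfl⟩
    simpa [ha.extend_apply] using hi
  · simp [Function.extend_apply' _ _ _ hia, mem_of_mem_nhds hV] at hi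

lemma tendsto_atTop_prod_nhdsWithin_of_forall_curve [LinearOrder ι] [NoMaxOrder ι]
    [(atTop : Filter ι).IsCountablyGenerated] [FirstCountableTopology X] {F : ι × X → Y}
    {l : Filter Y} {s : Set X} (hx : x ∈ s)
    (h : ∀ γ : ι → X, (∀ u, γ u ∈ s) → Tendsto γ atTop (𝓝 x) →
      Tendsto (fun u => F (u, γ u)) atTop l) :
    Tendsto F (atTop ×ˢ 𝓝[s] x) l := by
  intro V hV
  suffices hmem : ∀ᶠ p in atTop ×ˢ 𝓝[s] x, F p ∈ V from hmem
  by_contra hbad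
  have hfreq : ∃ᶠ p in atTop ×ˢ 𝓝[s] x, F p ∉ V ∧ p.2 ∈ s :=
    (not_eventually.1 hbad).and_eventually (tendsto_snd.eventually self_mem_nhdsWithin)
  obtain ⟨p, hp, hpV⟩ := exists_seq_forall_of_frequently hfreq
  obtain ⟨hp₁, hp₂⟩ := tendsto_prod_iff'.1 hp
  obtain ⟨φ, hφ, hmono⟩ := strictMono_subseq_of_tendsto_atTop hp₁
  set γ : ι → X := Function.extend (fun n => (p (φ n)).1) (fun n => (p (φ n)).2) fun _ => x with hγ
  have hγ_apply : ∀ n, γ (p (φ n)).1 = (p (φ n)).2 := fun n => hmono.injective.extend_apply _ _ n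
  have hγ_mem : ∀ u, γ u ∈ s := fun u => by
    by_cases hu : ∃ n, (p (φ n)).1 = u
    · obtain ⟨n, rfl⟩ := hu
      exact hγ_apply n ▸ (hpV (φ n)).2
    · rwa [hγ, Function.extend_apply' _ _ _ hu]
  have hγ_tendsto : Tendsto γ atTop (𝓝 x) := by
    refine (tendsto_extend_const_cofinite hmono.injective ?_).mono_left atTop_le_cofinite
    rw [Nat.cofinite_eq_atTop]
    exact (tendsto_nhds_of_tendsto_nhdsWithin hp₂).comp hφ.tendsto_atTop
  have hV_seq : ∀ᶠ n in atTop, F ((p (φ n)).1, γ (p (φ n)).1) ∈ V :=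
    ((h γ hγ_mem hγ_tendsto).comp (hp₁.comp hφ.tendsto_atTop)).eventually_mem hV
  obtain ⟨n, hn⟩ := hV_seq.exists
  rw [hγ_apply n] at hn
  exact (hpV (φ n)).1 hn

lemma eventually_forall_mem_of_isCompact_s9 {l : Filter ι} {K s : Set X} (hK : IsCompact K)
    (hKs : K ⊆ s) {p : ι → X → Prop}
    (h : ∀ x ∈ K, ∀ᶠ z : ι × X in l ×ˢ 𝓝[s] x, p z.1 z.2) :
    ∀ᶠ i in l, ∀ x ∈ K, p i x := by
  have hlocal : ∀ x ∈ K, {z : ι × X | z.2 ∈ s → p z.1 z.2} ∈ l ×ˢ 𝓝 x := fun x hx => by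
    obtain ⟨pι, hpι, pX, hpX, hp⟩ := eventually_prod_iff.1 (h x hx)
    filter_upwards [prod_mem_prod hpι (eventually_nhdsWithin_iff.1 hpX)] with z hz hzs
    exact hp hz.1 (hz.2 hzs)
  have hK_prod : ∀ᶠ z in l ×ˢ 𝓝ˢ K, z.2 ∈ s → p z.1 z.2 := hK.mem_prod_nhdsSet_of_forall hlocal
  exact hK_prod.curry.mono fun i hi x hx => hi.self_of_nhdsSet x hx (hKs hx)

end ContinuousConvergence

section LaplacePrinciple

open scoped ENNReal

lemma integrable_exp_neg_mul_norm_rpow {E : Type*} [NormedAddCommGroup E] [NormedSpace ℝ E]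
    [FiniteDimensional ℝ E] [MeasurableSpace E] [BorelSpace E] (μ : Measure E)
    [μ.IsAddHaarMeasure] {b β : ℝ} (hb : 0 < b) (hβ : 0 < β) :
    Integrable (fun x : E => Real.exp (-b * ‖x‖ ^ β)) μ := by
  rcases subsingleton_or_nontrivial E with hE | hE
  · have : IsFiniteMeasure μ := ⟨isCompact_univ.measure_lt_top⟩
    exact Integrable.of_finite
  · rw [integrable_fun_norm_addHaar μ (f := fun r => Real.exp (-b * r ^ β))]
    have hdim : (-1 : ℝ) < ((Module.finrank ℝ E - 1 : ℕ) : ℝ) :=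
      neg_one_lt_zero.trans_le (Nat.cast_nonneg _)
    simpa [Real.rpow_natCast] using integrableOn_rpow_mul_exp_neg_mul_rpow hdim hβ hb

/-- The measure on `Ξ` with unnormalized density `e^{-Q}` with respect to `μ`, for which the large
deviation bound is proved; the density is spelled as in `Assumption1`. -/
def expNegMeasure {E : Type*} [MeasurableSpace E] (μ : Measure E) (Ξ : Set E) (Q : E → ℝ) :
    Measure E :=
  μ.withDensity fun z => ENNReal.ofReal (Ξ.indicator (fun z' => Real.exp (-(Q z'))) z)

lemma expNegMeasure_apply {E : Type*} [MeasurableSpace E] {μ : Measure E} {Ξ A : Set E}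
    {Q : E → ℝ} (hΞ : MeasurableSet Ξ) (hA : MeasurableSet A) :
    expNegMeasure μ Ξ Q A = ∫⁻ z in A ∩ Ξ, ENNReal.ofReal (Real.exp (-(Q z))) ∂μ := by
  rw [expNegMeasure, withDensity_apply _ hA, inter_comm, ← Measure.restrict_restrict hΞ,
    ← lintegral_indicator hΞ]
  congr with z
  by_cases hz : z ∈ Ξ <;> simp [hz]

lemma expNegMeasure_apply_le {E : Type*} [MeasurableSpace E] {μ : Measure E} {Ξ A : Set E}
    {Q : E → ℝ} {m ε : ℝ} (hΞ : MeasurableSet Ξ) (hA : MeasurableSet A) (hε : ε ≤ 1)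
    (hm : ∀ z ∈ A ∩ Ξ, m ≤ Q z) :
    expNegMeasure μ Ξ Q A ≤
      ENNReal.ofReal (Real.exp (-((1 - ε) * m))) *
        ∫⁻ z in Ξ, ENNReal.ofReal (Real.exp (-(ε * Q z))) ∂μ := by
  have hpointwise : ∀ z ∈ A ∩ Ξ, ENNReal.ofReal (Real.exp (-(Q z))) ≤
      ENNReal.ofReal (Real.exp (-((1 - ε) * m))) * ENNReal.ofReal (Real.exp (-(ε * Q z))) := by
    intro z hz
    rw [← ENNReal.ofReal_mul (Real.exp_nonneg _), ← Real.exp_add]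
    gcongr
    nlinarith [hm z hz]
  calc expNegMeasure μ Ξ Q A
      = ∫⁻ z in A ∩ Ξ, ENNReal.ofReal (Real.exp (-(Q z))) ∂μ := expNegMeasure_apply hΞ hA
    _ ≤ ∫⁻ z in A ∩ Ξ, ENNReal.ofReal (Real.exp (-((1 - ε) * m))) *
          ENNReal.ofReal (Real.exp (-(ε * Q z))) ∂μ := setLIntegral_mono' (hA.inter hΞ) hpointwise
    _ ≤ ∫⁻ z in Ξ, ENNReal.ofReal (Real.exp (-((1 - ε) * m))) *
          ENNReal.ofReal (Real.exp (-(ε * Q z))) ∂μ := lintegral_mono_set inter_subset_right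
    _ = _ := lintegral_const_mul' _ _ ENNReal.ofReal_ne_top

variable {ι : Type*} {l : Filter ι} {r : ι → ℝ}

lemma eventually_exp_neg_mul_const_le (hr : Tendsto r l atTop) {K : ℝ≥0∞} (hK : K ≠ ∞)
    {M M' : ℝ} (hM : M < M') :
    ∀ᶠ i in l, ENNReal.ofReal (Real.exp (-(M' * r i))) * K ≤
      ENNReal.ofReal (Real.exp (-(M * r i))) := by
  have hexp : Tendsto (fun i => Real.exp ((M' - M) * r i)) l atTop :=
    Real.tendsto_exp_atTop.comp (hr.const_mul_atTop (sub_pos.2 hM))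
  filter_upwards [hexp.eventually_ge_atTop K.toReal] with i hi
  rw [← ENNReal.ofReal_toReal hK, ← ENNReal.ofReal_mul (Real.exp_nonneg _)]
  apply ENNReal.ofReal_le_ofReal
  calc Real.exp (-(M' * r i)) * K.toReal
      ≤ Real.exp (-(M' * r i)) * Real.exp ((M' - M) * r i) := by gcongr
    _ = Real.exp (-(M * r i)) := by rw [← Real.exp_add]; ring_nf

lemma limsup_log_div_le_neg {f : ι → ℝ≥0∞} {I : EReal} (hr : ∀ᶠ i in l, 0 < r i)
    (h : ∀ M : ℝ, (M : EReal) < I → ∀ᶠ i in l, f i ≤ ENNReal.ofReal (Real.exp (-(M * r i)))) :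
    limsup (fun i => ENNReal.log (f i) / (r i : EReal)) l ≤ -I := by
  rw [EReal.le_neg]
  refine EReal.ge_of_forall_gt_iff_ge.1 fun M hM => ?_
  rw [EReal.le_neg, ← EReal.coe_neg]
  refine limsup_le_of_le (h := ?_)
  filter_upwards [hr, h M hM] with i hri hfi
  rw [EReal.div_le_iff_le_mul (EReal.coe_pos.2 hri) (EReal.coe_ne_top _)]
  calc ENNReal.log (f i) ≤ ENNReal.log (ENNReal.ofReal (Real.exp (-(M * r i)))) :=
        ENNReal.log_monotone hfi
    _ = ((r i * -M : ℝ) : EReal) := by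
        rw [ENNReal.log_ofReal_of_pos (Real.exp_pos _), Real.log_exp]; ring_nf
    _ = _ := EReal.coe_mul _ _

end LaplacePrinciple

lemma exists_pos_lt_one_lt_one_sub_mul {M M' : ℝ} (h : M < M') :
    ∃ ε > 0, ε < 1 ∧ M < (1 - ε) * M' := by
  have hcont : Tendsto (fun ε : ℝ => (1 - ε) * M') (𝓝[>] 0) (𝓝 ((1 - 0) * M')) :=
    ((continuous_const.sub continuous_id).mul continuous_const).continuousWithinAt
  have hlt : ∀ᶠ ε in 𝓝[>] (0 : ℝ), M < (1 - ε) * M' := hcont.eventually_const_lt (by simpa)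
  obtain ⟨ε, hM, hε₀, hε₁⟩ := (hlt.and (Ioo_mem_nhdsGT one_pos)).exists
  exact ⟨ε, hε₀, hε₁, hM⟩

lemma volume_le_one_of_subset_zero {d : ℕ} {s : Set (Rn d)} (hs : s ⊆ {0}) : volume s ≤ 1 := by
  refine (measure_mono hs).trans ?_
  rcases d.eq_zero_or_pos with rfl | hd
  · simp [volume_euclideanSpace_eq_dirac]
  · have : Nonempty (Fin d) := ⟨⟨0, hd⟩⟩
    simp

section DyadicGrowth

variable {d : ℕ} {Ξ : Set (Rn d)} {f : Rn d → ℝ} {U β : ℝ}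

lemma IsPosCone.rpow_pow_mul_le_of_doubling (hcone : IsPosCone Ξ)
    (hdouble : ∀ z ∈ Ξ, U ≤ ‖z‖ → 2 ^ β * f z ≤ f ((2 : ℝ) • z)) (n : ℕ) :
    ∀ z ∈ Ξ, U ≤ ‖z‖ → (2 ^ β) ^ n * f z ≤ f ((2 : ℝ) ^ n • z) := by
  induction n with
  | zero => simp
  | succ n ih =>
    intro z hz hzU
    have hnorm : ‖z‖ ≤ ‖(2 : ℝ) ^ n • z‖ := by
      rw [norm_smul, norm_pow, Real.norm_two]
      exact le_mul_of_one_le_left (norm_nonneg z) (one_le_pow₀ one_le_two)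
    calc (2 ^ β) ^ (n + 1) * f z = 2 ^ β * ((2 ^ β) ^ n * f z) := by ring
      _ ≤ 2 ^ β * f ((2 : ℝ) ^ n • z) := by gcongr; exact ih z hz hzU
      _ ≤ f ((2 : ℝ) • (2 : ℝ) ^ n • z) :=
          hdouble _ (hcone _ (by positivity) z hz) (hzU.trans hnorm)
      _ = f ((2 : ℝ) ^ (n + 1) • z) := by rw [smul_smul, pow_succ']

lemma IsPosCone.mul_rpow_le_of_doubling (hcone : IsPosCone Ξ) (hβ : 0 ≤ β)
    (hdouble : ∀ z ∈ Ξ, U ≤ ‖z‖ → 2 ^ β * f z ≤ f ((2 : ℝ) • z)) {R m : ℝ} (hR : 0 < R)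
    (hUR : U ≤ R) (hm : 0 ≤ m) (hbase : ∀ z ∈ Ξ, R ≤ ‖z‖ → ‖z‖ ≤ 2 * R → m ≤ f z)
    {z : Rn d} (hz : z ∈ Ξ) (hRz : R ≤ ‖z‖) :
    m * (‖z‖ / (2 * R)) ^ β ≤ f z := by
  obtain ⟨n, hn, hn'⟩ := exists_nat_pow_near ((one_le_div hR).2 hRz) one_lt_two
  rw [le_div_iff₀ hR] at hn
  rw [div_lt_iff₀ hR, pow_succ] at hn'
  set y : Rn d := ((2 : ℝ) ^ n)⁻¹ • z
  have hyz : (2 : ℝ) ^ n • y = z := smul_inv_smul₀ (by positivity) z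
  have hy : y ∈ Ξ := hcone _ (by positivity) z hz
  have hzy : ‖z‖ = 2 ^ n * ‖y‖ := by rw [← hyz, norm_smul, norm_pow, Real.norm_two]
  have hRy : R ≤ ‖y‖ := le_of_mul_le_mul_left (hzy ▸ hn) (by positivity)
  have hyR : ‖y‖ ≤ 2 * R :=
    le_of_mul_le_mul_left (by rw [← hzy]; linarith) (by positivity : (0 : ℝ) < 2 ^ n)
  have hscale : (‖z‖ / (2 * R)) ^ β ≤ ((2 : ℝ) ^ β) ^ n := by
    rw [Real.rpow_pow_comm zero_le_two]
    refine Real.rpow_le_rpow (by positivity) ?_ hβ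
    rw [div_le_iff₀ (by positivity)]
    linarith
  calc m * (‖z‖ / (2 * R)) ^ β ≤ f y * (2 ^ β) ^ n :=
        mul_le_mul (hbase y hy hRy hyR) hscale (by positivity) (hm.trans (hbase y hy hRy hyR))
    _ = (2 ^ β) ^ n * f y := mul_comm _ _
    _ ≤ f z := hyz ▸ hcone.rpow_pow_mul_le_of_doubling hdouble n y hy (hUR.trans hRy)

end DyadicGrowth

namespace MultiRegVary

variable {d : ℕ} {Ξ : Set (Rn d)} {Q : Rn d → ℝ} {q : ℝ → ℝ} {lam : Rn d → ℝ} {α β : ℝ}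

lemma tendsto_prod_s9 (hQ : MultiRegVary Ξ Q q lam) {w : Rn d} (hw : w ∈ Ξ) :
    Tendsto (fun p : ℝ × Rn d => Q (p.1 • p.2) / q p.1) (atTop ×ˢ 𝓝[Ξ] w) (𝓝 (lam w)) :=
  tendsto_atTop_prod_nhdsWithin_of_forall_curve hw fun γ hγ hγw =>
    hQ.2.2.2 w hw γ (fun u _ => hγ u) hγw

lemma tendsto_ray (hQ : MultiRegVary Ξ Q q lam) {w : Rn d} (hw : w ∈ Ξ) :
    Tendsto (fun u : ℝ => Q (u • w) / q u) atTop (𝓝 (lam w)) :=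
  hQ.2.2.2 w hw (fun _ => w) (fun _ _ => hw) tendsto_const_nhds

lemma eventually_mul_le_of_isCompact (hQ : MultiRegVary Ξ Q q lam) (hq : RegVary q α)
    {K : Set (Rn d)} (hK : IsCompact K) (hKΞ : K ⊆ Ξ) {M : ℝ} (hM : ∀ w ∈ K, M < lam w) :
    ∀ᶠ u : ℝ in atTop, ∀ w ∈ K, M * q u ≤ Q (u • w) := by
  have hdiv : ∀ᶠ u : ℝ in atTop, ∀ w ∈ K, M < Q (u • w) / q u :=
    eventually_forall_mem_of_isCompact_s9 hK hKΞ fun w hw =>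
      (hQ.tendsto_prod_s9 (hKΞ hw)).eventually_const_lt (hM w hw)
  filter_upwards [hdiv, eventually_gt_atTop 0] with u hu hu₀ w hw
  exact ((lt_div_iff₀ (hq.1 u hu₀)).1 (hu w hw)).le

lemma limit_smul_s9 (hQ : MultiRegVary Ξ Q q lam) (hq : RegVary q α) (hcone : IsPosCone Ξ)
    {s : ℝ} (hs : 0 < s) {z : Rn d} (hz : z ∈ Ξ) :
    lam (s • z) = s ^ α * lam z := by
  have hrescaled : Tendsto (fun u : ℝ => q (u * s) / q u * (Q ((u * s) • z) / q (u * s))) atTop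
      (𝓝 (s ^ α * lam z)) :=
    (hq.2 s hs).mul ((hQ.tendsto_ray hz).comp (tendsto_id.atTop_mul_const hs))
  refine tendsto_nhds_unique (hQ.tendsto_ray (hcone s hs z hz)) (hrescaled.congr' ?_)
  filter_upwards [eventually_gt_atTop 0] with u hu
  have hqus := hq.1 (u * s) (mul_pos hu hs)
  rw [smul_smul]
  field_simp

lemma limit_pos (hQ : MultiRegVary Ξ Q q lam) (hq : RegVary q α) (hcone : IsPosCone Ξ)
    (hlam : ∀ z ∈ Ξ, ‖z‖ = 1 → 0 < lam z) {z : Rn d} (hz : z ∈ Ξ) (hz₀ : z ≠ 0) :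
    0 < lam z := by
  have hnorm : 0 < ‖z‖ := norm_pos_iff.2 hz₀
  have hunit := hlam _ (hcone _ (inv_pos.2 hnorm) z hz) (norm_smul_inv_norm hz₀)
  rw [hQ.limit_smul_s9 hq hcone (inv_pos.2 hnorm) hz] at hunit
  exact pos_of_mul_pos_right hunit (by positivity)

lemma exists_doubling (hQ : MultiRegVary Ξ Q q lam) (hq : RegVary q α) (hcl : IsClosed Ξ)
    (hcone : IsPosCone Ξ) (hlam : ∀ z ∈ Ξ, ‖z‖ = 1 → 0 < lam z) (hβα : β < α) :
    ∃ U : ℝ, ∀ z ∈ Ξ, U ≤ ‖z‖ → 2 ^ β * Q z ≤ Q ((2 : ℝ) • z) := by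
  have hsphere : IsCompact (Metric.sphere (0 : Rn d) 1 ∩ Ξ) :=
    (isCompact_sphere _ _).inter_right hcl
  have hunif : ∀ᶠ u : ℝ in atTop, ∀ θ ∈ Metric.sphere (0 : Rn d) 1 ∩ Ξ,
      2 ^ β * (Q (u • θ) / q u) < Q (u • (2 : ℝ) • θ) / q u := by
    refine eventually_forall_mem_of_isCompact_s9 hsphere inter_subset_right fun θ ⟨hθ₁, hθ⟩ => ?_
    have hpush : Tendsto (fun p : ℝ × Rn d => (p.1, (2 : ℝ) • p.2)) (atTop ×ˢ 𝓝[Ξ] θ)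
        (atTop ×ˢ 𝓝[Ξ] ((2 : ℝ) • θ)) :=
      tendsto_id.prodMap <| (continuous_const_smul (2 : ℝ)).continuousWithinAt.tendsto_nhdsWithin
        fun z hz => hcone 2 two_pos z hz
    refine ((hQ.tendsto_prod_s9 hθ).const_mul (2 ^ β)).eventually_lt
      ((hQ.tendsto_prod_s9 (hcone 2 two_pos θ hθ)).comp hpush) ?_
    rw [hQ.limit_smul_s9 hq hcone two_pos hθ]
    exact mul_lt_mul_of_pos_right (Real.rpow_lt_rpow_of_exponent_lt one_lt_two hβα)
      (hlam θ hθ (by simpa using hθ₁))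
  obtain ⟨U, hU⟩ := eventually_atTop.1 hunif
  refine ⟨max U 1, fun z hz hzU => ?_⟩
  have hz₀ : 0 < ‖z‖ := one_pos.trans_le ((le_max_right _ _).trans hzU)
  have hunit : ‖z‖⁻¹ • z ∈ Metric.sphere (0 : Rn d) 1 ∩ Ξ :=
    ⟨by simp [norm_smul, hz₀.ne'], hcone _ (inv_pos.2 hz₀) z hz⟩
  have hlt := hU ‖z‖ ((le_max_left _ _).trans hzU) _ hunit
  rw [smul_comm ‖z‖ (2 : ℝ), smul_inv_smul₀ hz₀.ne', ← mul_div_assoc,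
    div_lt_div_iff_of_pos_right (hq.1 _ hz₀)] at hlt
  exact hlt.le

lemma exists_mul_le_on_annulus (hQ : MultiRegVary Ξ Q q lam) (hq : RegVary q α)
    (hcl : IsClosed Ξ) (hcone : IsPosCone Ξ) (hlam : ∀ z ∈ Ξ, ‖z‖ = 1 → 0 < lam z) :
    ∃ c > 0, ∀ᶠ u : ℝ in atTop, ∀ w ∈ Ξ, 1 ≤ ‖w‖ → ‖w‖ ≤ 2 → c * q u ≤ Q (u • w) := by
  set K : Set (Rn d) := Metric.closedBall 0 2 ∩ ({w | 1 ≤ ‖w‖} ∩ Ξ)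
  have hK : IsCompact K := (isCompact_closedBall _ _).inter_right
    ((isClosed_le continuous_const continuous_norm).inter hcl)
  have hKΞ : K ⊆ Ξ := fun w hw => hw.2.2
  have hpos : ∀ w ∈ K, 0 < lam w := fun w hw =>
    hQ.limit_pos hq hcone hlam hw.2.2 (norm_pos_iff.1 (one_pos.trans_le hw.2.1))
  obtain ⟨c, hc, hcK⟩ := hK.exists_forall_le' (hQ.2.2.1.mono hKΞ) hpos
  refine ⟨c / 2, half_pos hc, ?_⟩
  filter_upwards [hQ.eventually_mul_le_of_isCompact hq hK hKΞ
    fun w hw => (half_lt_self hc).trans_le (hcK w hw)] with u hu w hw hw₁ hw₂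
  exact hu w ⟨by simpa using hw₂, hw₁, hw⟩

lemma exists_potter_lower_bound (hQ : MultiRegVary Ξ Q q lam) (hq : RegVary q α)
    (hcl : IsClosed Ξ) (hcone : IsPosCone Ξ) (hlam : ∀ z ∈ Ξ, ‖z‖ = 1 → 0 < lam z)
    (hβ : 0 ≤ β) (hβα : β < α) :
    ∃ c > 0, ∀ᶠ u : ℝ in atTop, ∀ w ∈ Ξ, 1 ≤ ‖w‖ → c * ‖w‖ ^ β * q u ≤ Q (u • w) := by
  obtain ⟨U, hU⟩ := hQ.exists_doubling hq hcl hcone hlam hβα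
  obtain ⟨c, hc, hannulus⟩ := hQ.exists_mul_le_on_annulus hq hcl hcone hlam
  refine ⟨c / 2 ^ β, by positivity, ?_⟩
  filter_upwards [hannulus, eventually_ge_atTop U, eventually_gt_atTop 0] with u hu huU hu₀ w hw hw₁
  have hnorm : ∀ z : Rn d, ‖u • z‖ = u * ‖z‖ := fun z => norm_smul_of_nonneg hu₀.le z
  have hbase : ∀ z ∈ Ξ, u ≤ ‖z‖ → ‖z‖ ≤ 2 * u → c * q u ≤ Q z := fun z hz huz hzu => by
    have hz' : u • u⁻¹ • z = z := smul_inv_smul₀ hu₀.ne' z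
    rw [← hz', hnorm] at huz hzu
    rw [← hz']
    exact hu _ (hcone _ (inv_pos.2 hu₀) z hz) (by nlinarith) (by nlinarith)
  have hgrowth := hcone.mul_rpow_le_of_doubling hβ hU hu₀ huU
    (mul_nonneg hc.le (hq.1 u hu₀).le) hbase (hcone u hu₀ w hw)
    (by rw [hnorm]; exact le_mul_of_one_le_right hu₀.le hw₁)
  calc c / 2 ^ β * ‖w‖ ^ β * q u = c * q u * (‖u • w‖ / (2 * u)) ^ β := by
        rw [hnorm, mul_comm 2 u, mul_div_mul_left _ _ hu₀.ne',
          Real.div_rpow (norm_nonneg w) zero_le_two]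
        ring
    _ ≤ Q (u • w) := hgrowth

lemma exists_mul_rpow_sub_le (hQ : MultiRegVary Ξ Q q lam) (hq : RegVary q α)
    (hcl : IsClosed Ξ) (hcone : IsPosCone Ξ) (hlam : ∀ z ∈ Ξ, ‖z‖ = 1 → 0 < lam z)
    (hβ : 0 ≤ β) (hβα : β < α) :
    ∃ c > 0, ∃ b, ∀ z ∈ Ξ, c * ‖z‖ ^ β - b ≤ Q z := by
  obtain ⟨c, hc, hpotter⟩ := hQ.exists_potter_lower_bound hq hcl hcone hlam hβ hβα
  obtain ⟨u, hu, hu₀⟩ := (hpotter.and (eventually_gt_atTop 0)).exists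
  have hqu := hq.1 u hu₀
  refine ⟨c * q u / u ^ β, by positivity, c * q u, fun z hz => ?_⟩
  have hscale : c * q u / u ^ β * ‖z‖ ^ β = c * (‖z‖ / u) ^ β * q u := by
    rw [Real.div_rpow (norm_nonneg z) hu₀.le]
    ring
  rw [hscale]
  rcases le_total u ‖z‖ with huz | hzu
  · have hw : ‖u⁻¹ • z‖ = ‖z‖ / u := by
      rw [norm_smul_of_nonneg (inv_nonneg.2 hu₀.le), inv_mul_eq_div]
    have hlower := hu (u⁻¹ • z) (hcone _ (inv_pos.2 hu₀) z hz) (hw ▸ (one_le_div hu₀).2 huz)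
    rw [hw, smul_inv_smul₀ hu₀.ne'] at hlower
    exact (sub_le_self _ (by positivity)).trans hlower
  · have hle : (‖z‖ / u) ^ β ≤ 1 :=
      Real.rpow_le_one (by positivity) ((div_le_one hu₀).2 hzu) hβ
    have hcq : c * (‖z‖ / u) ^ β * q u ≤ c * 1 * q u := by gcongr
    linarith [hQ.1 z hz]

lemma setLIntegral_exp_neg_mul_lt_top (hQ : MultiRegVary Ξ Q q lam) (hq : RegVary q α)
    (hcl : IsClosed Ξ) (hcone : IsPosCone Ξ) (hlam : ∀ z ∈ Ξ, ‖z‖ = 1 → 0 < lam z)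
    (hα : 0 < α) {ε : ℝ} (hε : 0 < ε) :
    ∫⁻ z in Ξ, ENNReal.ofReal (Real.exp (-(ε * Q z))) < ⊤ := by
  obtain ⟨c, hc, b, hb⟩ :=
    hQ.exists_mul_rpow_sub_le hq hcl hcone hlam (half_pos hα).le (half_lt_self hα)
  have hint : Integrable fun z : Rn d => Real.exp (ε * b) * Real.exp (-(ε * c) * ‖z‖ ^ (α / 2)) :=
    (integrable_exp_neg_mul_norm_rpow volume (mul_pos hε hc) (half_pos hα)).const_mul _
  calc ∫⁻ z in Ξ, ENNReal.ofReal (Real.exp (-(ε * Q z)))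
      ≤ ∫⁻ z in Ξ, ENNReal.ofReal (Real.exp (ε * b) * Real.exp (-(ε * c) * ‖z‖ ^ (α / 2))) := by
        refine setLIntegral_mono' hcl.measurableSet fun z hz => ?_
        rw [← Real.exp_add]
        gcongr
        linarith [mul_le_mul_of_nonneg_left (hb z hz) hε.le]
    _ < ⊤ := hint.integrableOn.lintegral_lt_top

lemma tendsto_scale_atTop (hQ : MultiRegVary Ξ Q q lam) (hq : RegVary q α)
    (hcl : IsClosed Ξ) (hcone : IsPosCone Ξ) (hlam : ∀ z ∈ Ξ, ‖z‖ = 1 → 0 < lam z)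
    (hα : 0 < α) {z : Rn d} (hz : z ∈ Ξ) (hz₀ : z ≠ 0) :
    Tendsto q atTop atTop := by
  obtain ⟨c, hc, b, hb⟩ :=
    hQ.exists_mul_rpow_sub_le hq hcl hcone hlam (half_pos hα).le (half_lt_self hα)
  have hnorm : Tendsto (fun u : ℝ => ‖u • z‖) atTop atTop := by
    simp only [norm_smul]
    exact tendsto_norm_atTop_atTop.atTop_mul_const (norm_pos_iff.2 hz₀)
  have hpower : Tendsto (fun u : ℝ => c * ‖u • z‖ ^ (α / 2) - b) atTop atTop :=
    tendsto_atTop_add_const_right _ _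
      (((tendsto_rpow_atTop (half_pos hα)).comp hnorm).const_mul_atTop hc)
  have hQ_ray : Tendsto (fun u : ℝ => Q (u • z)) atTop atTop := by
    refine tendsto_atTop_mono' _ ?_ hpower
    filter_upwards [eventually_gt_atTop 0] with u hu using hb _ (hcone u hu z hz)
  have hlam₁ : 0 < lam z + 1 := by linarith [hQ.2.1 z hz]
  refine tendsto_atTop_mono' _ ?_ (hQ_ray.atTop_div_const hlam₁)
  filter_upwards [(hQ.tendsto_ray hz).eventually_lt_const (lt_add_one (lam z)),
    eventually_gt_atTop 0] with u hu hu₀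
  rw [div_le_iff₀ hlam₁, mul_comm]
  exact ((div_lt_iff₀ (hq.1 u hu₀)).1 hu).le

lemma eventually_mul_le_of_isClosed (hQ : MultiRegVary Ξ Q q lam) (hq : RegVary q α)
    (hcl : IsClosed Ξ) (hcone : IsPosCone Ξ) (hlam : ∀ z ∈ Ξ, ‖z‖ = 1 → 0 < lam z)
    (hα : 0 < α) {C : Set (Rn d)} (hC : IsClosed C) {M : ℝ} (hM : ∀ w ∈ C ∩ Ξ, M < lam w) :
    ∀ᶠ u : ℝ in atTop, ∀ w ∈ C ∩ Ξ, M * q u ≤ Q (u • w) := by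
  obtain ⟨c, hc, hpotter⟩ :=
    hQ.exists_potter_lower_bound hq hcl hcone hlam (half_pos hα).le (half_lt_self hα)
  have hpower : Tendsto (fun r : ℝ => c * r ^ (α / 2)) atTop atTop :=
    (tendsto_rpow_atTop (half_pos hα)).const_mul_atTop hc
  obtain ⟨R, hR⟩ :=
    eventually_atTop.1 ((hpower.eventually_ge_atTop M).and (eventually_ge_atTop 1))
  have hK : IsCompact (Metric.closedBall (0 : Rn d) R ∩ (C ∩ Ξ)) :=
    (isCompact_closedBall _ _).inter_right (hC.inter hcl)
  filter_upwards [hQ.eventually_mul_le_of_isCompact hq hK (fun w hw => hw.2.2)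
    (fun w hw => hM w hw.2), hpotter, eventually_gt_atTop 0] with u hball hfar hu w hw
  rcases le_total ‖w‖ R with hwR | hRw
  · exact hball w ⟨by simpa using hwR, hw⟩
  · obtain ⟨hMw, hw₁⟩ := hR ‖w‖ hRw
    exact (mul_le_mul_of_nonneg_right hMw (hq.1 u hu).le).trans (hfar w hw.2 hw₁)

lemma eventually_expNegMeasure_le_mul_lintegral (hQ : MultiRegVary Ξ Q q lam) (hq : RegVary q α)
    (hcl : IsClosed Ξ) (hcone : IsPosCone Ξ) (hlam : ∀ z ∈ Ξ, ‖z‖ = 1 → 0 < lam z)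
    (hα : 0 < α) {C : Set (Rn d)} (hC : IsClosed C) {M : ℝ} (hM : ∀ w ∈ C ∩ Ξ, M < lam w)
    {ε : ℝ} (hε : ε ≤ 1) :
    ∀ᶠ u : ℝ in atTop, expNegMeasure volume Ξ Q {z : Rn d | u⁻¹ • z ∈ C} ≤
      ENNReal.ofReal (Real.exp (-((1 - ε) * M * q u))) *
        ∫⁻ z in Ξ, ENNReal.ofReal (Real.exp (-(ε * Q z))) := by
  filter_upwards [hQ.eventually_mul_le_of_isClosed hq hcl hcone hlam hα hC hM,
    eventually_gt_atTop 0] with u hu hu₀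
  rw [mul_assoc]
  refine expNegMeasure_apply_le hcl.measurableSet
    (hC.preimage (continuous_const_smul u⁻¹)).measurableSet hε fun z ⟨hzC, hz⟩ => ?_
  simpa only [smul_inv_smul₀ hu₀.ne'] using hu (u⁻¹ • z) ⟨hzC, hcone _ (inv_pos.2 hu₀) z hz⟩

lemma eventually_expNegMeasure_le (hQ : MultiRegVary Ξ Q q lam) (hq : RegVary q α)
    (hcl : IsClosed Ξ) (hcone : IsPosCone Ξ) (hlam : ∀ z ∈ Ξ, ‖z‖ = 1 → 0 < lam z)
    (hα : 0 < α) {C : Set (Rn d)} (hC : IsClosed C) {M M' : ℝ} (hMM' : M < M')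
    (hM' : ∀ w ∈ C ∩ Ξ, M' < lam w) :
    ∀ᶠ u : ℝ in atTop, expNegMeasure volume Ξ Q {z : Rn d | u⁻¹ • z ∈ C} ≤
      ENNReal.ofReal (Real.exp (-(M * q u))) := by
  have hbound {ε : ℝ} (hε : ε ≤ 1) :=
    hQ.eventually_expNegMeasure_le_mul_lintegral hq hcl hcone hlam hα hC hM' hε
  -- If `Ξ ⊆ {0}`, nothing forces `q` to tend to infinity, but then `volume Ξ ≤ 1` allows `ε = 0`.
  by_cases hΞ : Ξ ⊆ {0}
  · filter_upwards [hbound zero_le_one, eventually_gt_atTop 0] with u hu hu₀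
    have hqu := (hq.1 u hu₀).le
    calc expNegMeasure volume Ξ Q {z : Rn d | u⁻¹ • z ∈ C}
        ≤ ENNReal.ofReal (Real.exp (-(M' * q u))) * volume Ξ := by simpa using hu
      _ ≤ ENNReal.ofReal (Real.exp (-(M' * q u))) :=
          mul_le_of_le_one_right' (volume_le_one_of_subset_zero hΞ)
      _ ≤ ENNReal.ofReal (Real.exp (-(M * q u))) := by gcongr
  · obtain ⟨z, hz, hz₀⟩ := not_subset.1 hΞ
    obtain ⟨ε, hε₀, hε₁, hMε⟩ := exists_pos_lt_one_lt_one_sub_mul hMM'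
    have hK := hQ.setLIntegral_exp_neg_mul_lt_top hq hcl hcone hlam hα hε₀
    filter_upwards [hbound hε₁.le, eventually_exp_neg_mul_const_le
      (hQ.tendsto_scale_atTop hq hcl hcone hlam hα hz hz₀) hK.ne hMε] with u hu hu'
    exact hu.trans hu'

end MultiRegVary

theorem primitive_ldp_upper_general {d : ℕ} {Ξ : Set (Rn d)} {Q : Rn d → ℝ} {q : ℝ → ℝ}
    {lam : Rn d → ℝ} {α : ℝ} (hcl : IsClosed Ξ) (hcone : IsPosCone Ξ) (hα : 0 < α)
    (hq : RegVary q α) (hQ : MultiRegVary Ξ Q q lam) (hlam : ∀ z ∈ Ξ, ‖z‖ = 1 → 0 < lam z)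
    {C : Set (Rn d)} (hC : IsClosed C) :
    limsup (fun u : ℝ => ENNReal.log (expNegMeasure volume Ξ Q {z : Rn d | u⁻¹ • z ∈ C}) /
        ((q u : ℝ) : EReal)) atTop
      ≤ - ⨅ w ∈ C ∩ Ξ, (lam w : EReal) := by
  refine limsup_log_div_le_neg ((eventually_gt_atTop 0).mono hq.1) fun M hM => ?_
  obtain ⟨M', hMM', hM'⟩ := EReal.lt_iff_exists_real_btwn.1 hM
  have hM'_lam : ∀ w ∈ C ∩ Ξ, M' < lam w := fun w hw =>
    EReal.coe_lt_coe_iff.1 (hM'.trans_le (iInf₂_le w hw))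
  exact hQ.eventually_expNegMeasure_le hq hcl hcone hlam hα hC
    (EReal.coe_lt_coe_iff.1 hMM') hM'_lam

/-- Primitive large deviation upper bound: for every closed set `C`,
`limsup_{u→∞} log P(z/u ∈ C) / q(u) ≤ −inf{lam(w) : w ∈ C ∩ Ξ}`
(in `EReal`, with `log 0 = ⊥` and `inf ∅ = ⊤`). -/
theorem primitive_ldp_upper {d : ℕ} (P : Measure (Rn d)) (Ξ : Set (Rn d))
    (Q : Rn d → ℝ) (q : ℝ → ℝ) (lam : Rn d → ℝ) (α : ℝ)
    (hA1 : Assumption1 P Ξ Q q lam α)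
    (C : Set (Rn d)) (hC : IsClosed C) :
    Filter.limsup
        (fun u : ℝ => ENNReal.log (P {z : Rn d | u⁻¹ • z ∈ C}) / ((q u : ℝ) : EReal))
        atTop
      ≤ - ⨅ w ∈ C ∩ Ξ, (lam w : EReal) := by
  obtain ⟨-, -, hcl, hcone, -, -, rfl, hα, hq, hQ, hlam⟩ := hA1
  exact primitive_ldp_upper_general hcl hcone hα hq hQ hlam hC
end
end
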